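/- Main theorem (optimal Hardy-weight for Q_{p,A,V/c_p}): let c_p := (p/(p−1))^{p−1}, let V : Ω → ℝ lie in M^q_loc(p;Ω), assume Q_{p,A,V} is subcritical in Ω, and suppose there exist a nonnegative φ ∈ C_c^∞(Ω), not identically 0, and a positive weak solution G ∈ C^{1,α}(Ω) (α ∈ (0,1]) of Q_{p,A,V}(u) = φ in Ω satisfying: G → 0 at infinity in Ω, ∫_Ω V G^{p−1} dx < 0, and ∫_Ω |V| G^{p−1} dx < ∞. Then Q_{p,A,V/c_p} admits an optimal Hardy-weight in Ω: there exist a continuous W : Ω → [0,∞), not identically 0, and a positive v ∈ C¹(Ω) such that (i) ∫_Ω (|∇ψ|_A^p + (V/c_p)|ψ|^p) dx ≥ ∫_Ω W|ψ|^p dx for all ψ ∈ C_c^∞(Ω); (ii) v is a weak solution of Q_{p,A,V/c_p−W}(u) = 0 in Ω; (iii) Q_{p,A,V/c_p−W} admits a null-sequence in Ω; and (iv) ∫_Ω W v^p dx = ∞. -/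

import Mathlib

/-!
# An optimal Hardy weight for `Q_{p,A,V/c_p}`

Put `a = (p-1)/p`, so that `a^{p-1} = 1/c_p`. The weight is
`W = a^p |∇G|_A^p / G^p + a^{p-1} φ / G^{p-1}` (`hardyW`) and the ground state is `v = G^a`.

The equation of `G` may be tested with compactly supported `C¹` functions, by mollification
(`HardySetup.eq_C1c`). Testing with `a^{p-1} G^{-a} ψ` shows that `v` solves `Q_{p,A,V/c_p-W} = 0`
(`HardySetup.ground_state`). Testing with `a^{p-1} |ψ|^p G^{1-p}` shows that the energy of
`Q_{p,A,V/c_p-W}` at `ψ` is the integral of the Picone integrand of `ψ` against `v`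
(`HardySetup.energy_eq`), which is nonnegative by Young's inequality; this is the Hardy inequality.

For the remaining two claims let `s = 1 + log(G/m)/κ`. As `G → 0` at infinity in `Ω`, a `C¹` function
`P(s)` with `P = 0` on `(-∞, 0]` has compact support in `Ω`. Testing the equation of `G` with it gives
`∫ P'(s) |∇G|_A^p / G = κ ∫ (φ - V G^{p-1}) P(s)` (`HardySetup.level_identity`), which plays the role
of the coarea formula.

* With `θ` a smooth step from `0` to `1`, the energy of `θ(s) v` is `∫ D(s) |∇G|_A^p / G`, where `D`
  is the Bregman divergence of `t ↦ t^p` between `aθ + θ'/κ` and `aθ`. It vanishes to second order,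
  so `κ ∫₀¹ D → 0` as `κ → ∞`, and by the level identity the energies tend to `0`. Mollifying `θ(s) v`
  gives the null-sequence (`HardySetup.exists_nullSequence`).
* With `P = θ`, the right-hand side grows like `κ (∫ φ - ∫ V G^{p-1})` with a positive factor, while
  the left-hand side is at most `sup θ' ∫ |∇G|_A^p / G ≤ C ∫ W v^p`. Hence `∫ W v^p = ∞`
  (`HardySetup.lintegral_eq_top`).
-/

open MeasureTheory Set Filter Topology

noncomputable section

variable {n : ℕ}

/-- The `A`-inner product `⟨A(x)ξ, η⟩`. -/
def aInner (A : EuclideanSpace ℝ (Fin n) → Matrix (Fin n) (Fin n) ℝ)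
    (x ξ η : EuclideanSpace ℝ (Fin n)) : ℝ :=
  ∑ i, ∑ j, A x i j * ξ j * η i

/-- `|ξ|_A := ⟨A(x)ξ, ξ⟩^{1/2}`. -/
def aNorm (A : EuclideanSpace ℝ (Fin n) → Matrix (Fin n) (Fin n) ℝ)
    (x ξ : EuclideanSpace ℝ (Fin n)) : ℝ :=
  Real.sqrt (aInner A x ξ ξ)

/-- Assumptions on the matrix field `A`: symmetric, positive definite, locally Hölder
continuous, and locally uniformly elliptic on `Ω`. -/
structure IsEllipticMatrix (Ω : Set (EuclideanSpace ℝ (Fin n)))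
    (A : EuclideanSpace ℝ (Fin n) → Matrix (Fin n) (Fin n) ℝ) : Prop where
  symm : ∀ x ∈ Ω, (A x).IsSymm
  posdef : ∀ x ∈ Ω, ∀ ξ : EuclideanSpace ℝ (Fin n), ξ ≠ 0 → 0 < aInner A x ξ ξ
  locHolder : ∀ K ⊆ Ω, IsCompact K → ∃ C > (0:ℝ), ∃ α ∈ Set.Ioc (0:ℝ) 1,
      ∀ x ∈ K, ∀ y ∈ K, ∀ i j, |A x i j - A y i j| ≤ C * dist x y ^ α
  elliptic : ∀ K ⊆ Ω, IsCompact K → ∃ Θ > (0:ℝ), ∀ x ∈ K, ∀ ξ : EuclideanSpace ℝ (Fin n),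
      Θ⁻¹ * ‖ξ‖ ^ 2 ≤ aInner A x ξ ξ ∧ aInner A x ξ ξ ≤ Θ * ‖ξ‖ ^ 2

/-- Test functions: `C_c^∞` functions with support in `U`. -/
def IsTestFun (U : Set (EuclideanSpace ℝ (Fin n))) (ψ : EuclideanSpace ℝ (Fin n) → ℝ) : Prop :=
  ContDiff ℝ (⊤ : ℕ∞) ψ ∧ HasCompactSupport ψ ∧ tsupport ψ ⊆ U

/-- Weakly `(p,A)`-harmonic in `U`. -/
def IsPAHarmonic (A : EuclideanSpace ℝ (Fin n) → Matrix (Fin n) (Fin n) ℝ) (p : ℝ)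
    (U : Set (EuclideanSpace ℝ (Fin n))) (G : EuclideanSpace ℝ (Fin n) → ℝ) : Prop :=
  ∀ ψ, IsTestFun U ψ →
    ∫ x in U, (aNorm A x (gradient G x)) ^ (p - 2) *
      aInner A x (gradient G x) (gradient ψ x) = 0

/-- Weak solution of `Q_{p,A,V}(u) = g` in `U` (for positive `u`). -/
def IsWeakSolution (A : EuclideanSpace ℝ (Fin n) → Matrix (Fin n) (Fin n) ℝ) (p : ℝ)
    (V g : EuclideanSpace ℝ (Fin n) → ℝ) (U : Set (EuclideanSpace ℝ (Fin n)))
    (u : EuclideanSpace ℝ (Fin n) → ℝ) : Prop :=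
  ∀ ψ, IsTestFun U ψ →
    (∫ x in U, (aNorm A x (gradient u x)) ^ (p - 2) *
        aInner A x (gradient u x) (gradient ψ x))
      + (∫ x in U, V x * u x ^ (p - 1) * ψ x)
      = ∫ x in U, g x * ψ x

/-- Weak supersolution of `Q_{p,A,V}(u) = 0` in `U` (for positive `u`). -/
def IsWeakSupersolution (A : EuclideanSpace ℝ (Fin n) → Matrix (Fin n) (Fin n) ℝ) (p : ℝ)
    (V : EuclideanSpace ℝ (Fin n) → ℝ) (U : Set (EuclideanSpace ℝ (Fin n)))
    (u : EuclideanSpace ℝ (Fin n) → ℝ) : Prop :=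
  ∀ ψ, IsTestFun U ψ → (∀ x, 0 ≤ ψ x) →
    0 ≤ (∫ x in U, (aNorm A x (gradient u x)) ^ (p - 2) *
        aInner A x (gradient u x) (gradient ψ x))
      + (∫ x in U, V x * u x ^ (p - 1) * ψ x)

/-- `Q_{p,A,V}` is subcritical in `Ω`. -/
def IsSubcritical (A : EuclideanSpace ℝ (Fin n) → Matrix (Fin n) (Fin n) ℝ) (p : ℝ)
    (V : EuclideanSpace ℝ (Fin n) → ℝ) (Ω : Set (EuclideanSpace ℝ (Fin n))) : Prop :=
  ∃ W₀ : EuclideanSpace ℝ (Fin n) → ℝ, ContinuousOn W₀ Ω ∧ (∀ x ∈ Ω, 0 ≤ W₀ x) ∧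
    (∃ x ∈ Ω, W₀ x ≠ 0) ∧
    ∀ ψ, IsTestFun Ω ψ →
      0 ≤ ∫ x in Ω, ((aNorm A x (gradient ψ x)) ^ p + (V x - W₀ x) * |ψ x| ^ p)

/-- A null-sequence for `Q_{p,A,V}` in `U`. -/
def IsNullSequence (A : EuclideanSpace ℝ (Fin n) → Matrix (Fin n) (Fin n) ℝ) (p : ℝ)
    (V : EuclideanSpace ℝ (Fin n) → ℝ) (U : Set (EuclideanSpace ℝ (Fin n)))
    (u : ℕ → EuclideanSpace ℝ (Fin n) → ℝ) : Prop :=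
  (∀ k, IsTestFun U (u k)) ∧ (∀ k x, 0 ≤ u k x) ∧
  (∃ B : Set (EuclideanSpace ℝ (Fin n)), IsOpen B ∧ B.Nonempty ∧
      IsCompact (closure B) ∧ closure B ⊆ U ∧
      ∃ c > (0:ℝ), ∀ k, c ≤ (∫ x in B, u k x ^ p) ∧ (∫ x in B, u k x ^ p) ≤ c⁻¹) ∧
  Tendsto (fun k => ∫ x in U,
      ((aNorm A x (gradient (u k) x)) ^ p + V x * |u k x| ^ p)) atTop (𝓝 0)

/-- `V` lies in the local Morrey space `M^q_loc(p;Ω)`. -/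
def InMorreyLoc (p : ℝ) (Ω : Set (EuclideanSpace ℝ (Fin n)))
    (V : EuclideanSpace ℝ (Fin n) → ℝ) : Prop :=
  if p < n then
    ∃ q : ℝ, q > (n : ℝ) / p ∧ ∀ ω : Set (EuclideanSpace ℝ (Fin n)),
      IsOpen ω → IsCompact (closure ω) → closure ω ⊆ Ω →
      ∃ M : ℝ, ∀ y ∈ ω, ∀ r ∈ Set.Ioo (0:ℝ) (Metric.diam ω),
        r ^ ((n : ℝ) / q - n) * (∫ x in ω ∩ Metric.ball y r, |V x|) ≤ M
  else if (n : ℝ) < p then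
    MeasureTheory.LocallyIntegrableOn V Ω
  else
    ∃ q : ℝ, q > (n : ℝ) ∧ ∀ ω : Set (EuclideanSpace ℝ (Fin n)),
      IsOpen ω → IsCompact (closure ω) → closure ω ⊆ Ω →
      ∃ M : ℝ, ∀ y ∈ ω, ∀ r ∈ Set.Ioo (0:ℝ) (Metric.diam ω),
        (Real.log (Metric.diam ω / r)) ^ (q * ((n : ℝ) - 1) / n) *
          (∫ x in ω ∩ Metric.ball y r, |V x|) ≤ M

/-- `G ∈ C^{1,α}(U)`: continuously differentiable with locally `α`-Hölder gradient. -/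
def IsC1Holder (α : ℝ) (U : Set (EuclideanSpace ℝ (Fin n)))
    (G : EuclideanSpace ℝ (Fin n) → ℝ) : Prop :=
  ContDiffOn ℝ 1 G U ∧ ∀ K ⊆ U, IsCompact K → ∃ C : ℝ,
    ∀ x ∈ K, ∀ y ∈ K, ‖gradient G x - gradient G y‖ ≤ C * dist x y ^ α

/-- `G → 0` at infinity in `Ω` (where `G` is considered on `U ⊆ Ω`). -/
def TendstoZeroAtInfinityIn (Ω U : Set (EuclideanSpace ℝ (Fin n)))
    (G : EuclideanSpace ℝ (Fin n) → ℝ) : Prop :=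
  ∀ ε > (0:ℝ), ∃ K ⊆ Ω, IsCompact K ∧ ∀ x ∈ U \ K, G x < ε

open scoped Classical in
/-- Flux integral `∫_S |∇G|_A^p / |∇G| dH^{n-1}`, with integrand `0` where `∇G = 0`. -/
def fluxIntegral (A : EuclideanSpace ℝ (Fin n) → Matrix (Fin n) (Fin n) ℝ) (p : ℝ)
    (G : EuclideanSpace ℝ (Fin n) → ℝ) (S : Set (EuclideanSpace ℝ (Fin n))) : ℝ :=
  ∫ x in S, (if gradient G x = 0 then 0
    else (aNorm A x (gradient G x)) ^ p / ‖gradient G x‖) ∂(μH[(n : ℝ) - 1])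

end

open scoped Convolution

/-! ### The `A`-inner product -/

section AInner

variable {n : ℕ} {Ω : Set (EuclideanSpace ℝ (Fin n))}
  {A : EuclideanSpace ℝ (Fin n) → Matrix (Fin n) (Fin n) ℝ}

lemma aInner_add_right (x ξ η ζ : EuclideanSpace ℝ (Fin n)) :
    aInner A x ξ (η + ζ) = aInner A x ξ η + aInner A x ξ ζ := by
  simp only [aInner, PiLp.add_apply, mul_add, Finset.sum_add_distrib]

lemma aInner_smul_right (x ξ η : EuclideanSpace ℝ (Fin n)) (c : ℝ) :
    aInner A x ξ (c • η) = c * aInner A x ξ η := by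
  simp only [aInner, PiLp.smul_apply, smul_eq_mul, Finset.mul_sum]
  refine Finset.sum_congr rfl fun i _ => Finset.sum_congr rfl fun j _ => ?_
  ring

lemma aInner_smul_left (x ξ η : EuclideanSpace ℝ (Fin n)) (c : ℝ) :
    aInner A x (c • ξ) η = c * aInner A x ξ η := by
  simp only [aInner, PiLp.smul_apply, smul_eq_mul, Finset.mul_sum]
  refine Finset.sum_congr rfl fun i _ => Finset.sum_congr rfl fun j _ => ?_
  ring

lemma aInner_add_left (x ξ η ζ : EuclideanSpace ℝ (Fin n)) :
    aInner A x (ξ + η) ζ = aInner A x ξ ζ + aInner A x η ζ := by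
  simp only [aInner, PiLp.add_apply, mul_add, add_mul, Finset.sum_add_distrib]

lemma aInner_zero_left (x η : EuclideanSpace ℝ (Fin n)) : aInner A x 0 η = 0 := by
  simp [aInner]

lemma aInner_zero_right (x η : EuclideanSpace ℝ (Fin n)) : aInner A x η 0 = 0 := by
  simp [aInner]

lemma aNorm_nonneg (x ξ : EuclideanSpace ℝ (Fin n)) : 0 ≤ aNorm A x ξ := Real.sqrt_nonneg _

lemma aNorm_zero (x : EuclideanSpace ℝ (Fin n)) : aNorm A x 0 = 0 := by
  simp [aNorm, aInner_zero_left]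

lemma aNorm_smul (x ξ : EuclideanSpace ℝ (Fin n)) (c : ℝ) :
    aNorm A x (c • ξ) = |c| * aNorm A x ξ := by
  rw [aNorm, aInner_smul_left, aInner_smul_right, ← mul_assoc,
    Real.sqrt_mul (mul_self_nonneg c), Real.sqrt_mul_self_eq_abs, aNorm]

lemma IsEllipticMatrix.aInner_comm (hA : IsEllipticMatrix Ω A) {x : EuclideanSpace ℝ (Fin n)}
    (hx : x ∈ Ω) (ξ η : EuclideanSpace ℝ (Fin n)) : aInner A x ξ η = aInner A x η ξ := by
  unfold aInner
  rw [Finset.sum_comm]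
  refine Finset.sum_congr rfl fun i _ => Finset.sum_congr rfl fun j _ => ?_
  rw [(hA.symm x hx).apply i j]
  ring

lemma IsEllipticMatrix.aInner_self_nonneg (hA : IsEllipticMatrix Ω A)
    {x : EuclideanSpace ℝ (Fin n)} (hx : x ∈ Ω) (ξ : EuclideanSpace ℝ (Fin n)) :
    0 ≤ aInner A x ξ ξ := by
  by_cases h : ξ = 0
  · simp [h, aInner_zero_left]
  · exact (hA.posdef x hx ξ h).le

lemma IsEllipticMatrix.aNorm_sq (hA : IsEllipticMatrix Ω A) {x : EuclideanSpace ℝ (Fin n)}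
    (hx : x ∈ Ω) (ξ : EuclideanSpace ℝ (Fin n)) : aNorm A x ξ ^ 2 = aInner A x ξ ξ :=
  Real.sq_sqrt (hA.aInner_self_nonneg hx ξ)

lemma IsEllipticMatrix.aNorm_eq_zero (hA : IsEllipticMatrix Ω A) {x : EuclideanSpace ℝ (Fin n)}
    (hx : x ∈ Ω) {ξ : EuclideanSpace ℝ (Fin n)} (h : aNorm A x ξ = 0) : ξ = 0 := by
  by_contra hne
  have h1 := hA.posdef x hx ξ hne
  rw [← hA.aNorm_sq hx, h] at h1
  simp at h1

/-- Cauchy–Schwarz for the `A`-inner product. -/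
lemma IsEllipticMatrix.abs_aInner_le (hA : IsEllipticMatrix Ω A) {x : EuclideanSpace ℝ (Fin n)}
    (hx : x ∈ Ω) (ξ η : EuclideanSpace ℝ (Fin n)) :
    |aInner A x ξ η| ≤ aNorm A x ξ * aNorm A x η := by
  have key : ∀ t : ℝ, 0 ≤ aInner A x ξ ξ * (t * t) + (2 * aInner A x ξ η) * t + aInner A x η η := by
    intro t
    have h := hA.aInner_self_nonneg hx (t • ξ + η)
    simp only [aInner_add_left, aInner_add_right, aInner_smul_left, aInner_smul_right] at h
    rw [hA.aInner_comm hx η ξ] at h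
    linarith
  have hd := discrim_le_zero key
  rw [discrim, ← hA.aNorm_sq hx, ← hA.aNorm_sq hx] at hd
  refine abs_le_of_sq_le_sq ?_ (mul_nonneg (aNorm_nonneg _ _) (aNorm_nonneg _ _))
  nlinarith

lemma IsEllipticMatrix.continuousOn_entry (hA : IsEllipticMatrix Ω A) (hΩ : IsOpen Ω)
    (i j : Fin n) : ContinuousOn (fun x => A x i j) Ω := by
  intro x hx
  obtain ⟨K, hK, hxK, hKΩ⟩ := exists_compact_subset hΩ hx
  obtain ⟨C, hC, α, hα, hH⟩ := hA.locHolder K hKΩ hK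
  refine ContinuousAt.continuousWithinAt ?_
  have hlim : Tendsto (fun y => C * dist y x ^ α) (𝓝 x) (𝓝 0) := by
    have : ContinuousAt (fun y : EuclideanSpace ℝ (Fin n) => C * dist y x ^ α) x := by
      refine continuousAt_const.mul ?_
      exact (continuous_id.dist continuous_const).continuousAt.rpow_const (Or.inr hα.1.le)
    simpa [ContinuousAt, Real.zero_rpow hα.1.ne'] using this
  rw [ContinuousAt, tendsto_iff_dist_tendsto_zero]
  refine squeeze_zero' (Eventually.of_forall fun _ => dist_nonneg) ?_ hlim
  filter_upwards [mem_interior_iff_mem_nhds.1 hxK] with y hy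
  rw [Real.dist_eq]
  exact hH y hy x (interior_subset hxK) i j

lemma IsEllipticMatrix.continuousOn_aInner (hA : IsEllipticMatrix Ω A) (hΩ : IsOpen Ω)
    {ξ η : EuclideanSpace ℝ (Fin n) → EuclideanSpace ℝ (Fin n)} (hξ : ContinuousOn ξ Ω)
    (hη : ContinuousOn η Ω) : ContinuousOn (fun x => aInner A x (ξ x) (η x)) Ω := by
  unfold aInner
  refine continuousOn_finsetSum _ fun i _ => continuousOn_finsetSum _ fun j _ => ?_
  refine ((hA.continuousOn_entry hΩ i j).mul ?_).mul ?_
  · exact (PiLp.continuous_apply 2 _ j).comp_continuousOn hξ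
  · exact (PiLp.continuous_apply 2 _ i).comp_continuousOn hη

lemma IsEllipticMatrix.continuousOn_aNorm (hA : IsEllipticMatrix Ω A) (hΩ : IsOpen Ω)
    {ξ : EuclideanSpace ℝ (Fin n) → EuclideanSpace ℝ (Fin n)} (hξ : ContinuousOn ξ Ω) :
    ContinuousOn (fun x => aNorm A x (ξ x)) Ω :=
  (hA.continuousOn_aInner hΩ hξ hξ).sqrt

/-- The flux `|ξ|_A^{p-2} ⟨Aξ, η⟩` is at most `|ξ|_A^{p-1} |η|_A`; in particular it is bounded
near `ξ = 0` although `|ξ|_A^{p-2}` need not be. -/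
lemma IsEllipticMatrix.abs_flux_le (hA : IsEllipticMatrix Ω A) {x : EuclideanSpace ℝ (Fin n)}
    (hx : x ∈ Ω) (p : ℝ) (ξ η : EuclideanSpace ℝ (Fin n)) :
    |aNorm A x ξ ^ (p - 2) * aInner A x ξ η| ≤ aNorm A x ξ ^ (p - 1) * aNorm A x η := by
  by_cases h : aNorm A x ξ = 0
  · rw [hA.aNorm_eq_zero hx h, aInner_zero_left, mul_zero, abs_zero]
    exact mul_nonneg (Real.rpow_nonneg (aNorm_nonneg _ _) _) (aNorm_nonneg _ _)
  · have hpos : 0 < aNorm A x ξ := lt_of_le_of_ne (aNorm_nonneg _ _) (Ne.symm h)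
    rw [abs_mul, abs_of_nonneg (Real.rpow_nonneg hpos.le _)]
    calc aNorm A x ξ ^ (p - 2) * |aInner A x ξ η|
        ≤ aNorm A x ξ ^ (p - 2) * (aNorm A x ξ * aNorm A x η) := by
          gcongr
          exact hA.abs_aInner_le hx ξ η
      _ = aNorm A x ξ ^ (p - 1) * aNorm A x η := by
          rw [← mul_assoc, ← Real.rpow_add_one hpos.ne']
          congr 2
          ring

lemma IsEllipticMatrix.flux_self (hA : IsEllipticMatrix Ω A) {x : EuclideanSpace ℝ (Fin n)}
    (hx : x ∈ Ω) {p : ℝ} (hp : 1 < p) (ξ : EuclideanSpace ℝ (Fin n)) :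
    aNorm A x ξ ^ (p - 2) * aInner A x ξ ξ = aNorm A x ξ ^ p := by
  by_cases h : aNorm A x ξ = 0
  · rw [h, hA.aNorm_eq_zero hx h, aInner_zero_left, mul_zero, Real.zero_rpow (by linarith)]
  · have hpos : 0 < aNorm A x ξ := lt_of_le_of_ne (aNorm_nonneg _ _) (Ne.symm h)
    rw [← hA.aNorm_sq hx, ← Real.rpow_natCast, ← Real.rpow_add hpos]
    congr 1
    push_cast
    ring

end AInner

/-! ### Gradients and mollification -/

section Gradient

variable {n : ℕ}

lemma HasFDerivAt.gradient_eq_symm {u : EuclideanSpace ℝ (Fin n) → ℝ}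
    {L : EuclideanSpace ℝ (Fin n) →L[ℝ] ℝ} {x : EuclideanSpace ℝ (Fin n)} (h : HasFDerivAt u L x) :
    gradient u x = (InnerProductSpace.toDual ℝ _).symm L := by
  rw [gradient, h.fderiv]

lemma ContDiffOn.continuousOn_gradient {Ω : Set (EuclideanSpace ℝ (Fin n))} (hΩ : IsOpen Ω)
    {u : EuclideanSpace ℝ (Fin n) → ℝ} (hu : ContDiffOn ℝ 1 u Ω) :
    ContinuousOn (gradient u) Ω :=
  (InnerProductSpace.toDual ℝ _).symm.continuous.comp_continuousOn
    (hu.continuousOn_fderiv_of_isOpen hΩ le_rfl)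

lemma norm_gradient (u : EuclideanSpace ℝ (Fin n) → ℝ) (x : EuclideanSpace ℝ (Fin n)) :
    ‖gradient u x‖ = ‖fderiv ℝ u x‖ := by
  simp [gradient]

lemma gradient_eq_zero_of_notMem_tsupport {u : EuclideanSpace ℝ (Fin n) → ℝ}
    {x : EuclideanSpace ℝ (Fin n)} (hx : x ∉ tsupport u) : gradient u x = 0 := by
  have : fderiv ℝ u x = 0 := by
    by_contra h
    exact hx (support_fderiv_subset ℝ h)
  simp [gradient, this]

/-- `C¹` functions with compact support in `Ω`. -/
structure IsC1c (Ω : Set (EuclideanSpace ℝ (Fin n))) (u : EuclideanSpace ℝ (Fin n) → ℝ) :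
    Prop where
  contDiff : ContDiff ℝ 1 u
  compact : HasCompactSupport u
  subset : tsupport u ⊆ Ω

lemma IsTestFun.isC1c {Ω : Set (EuclideanSpace ℝ (Fin n))} {u : EuclideanSpace ℝ (Fin n) → ℝ}
    (h : IsTestFun Ω u) : IsC1c Ω u :=
  ⟨h.1.of_le (by exact_mod_cast le_top), h.2.1, h.2.2⟩

lemma IsC1c.of_contDiffOn {Ω K : Set (EuclideanSpace ℝ (Fin n))} (hΩ : IsOpen Ω)
    (hK : IsCompact K) (hKΩ : K ⊆ Ω) {u : EuclideanSpace ℝ (Fin n) → ℝ}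
    (hu : ContDiffOn ℝ 1 u Ω) (h0 : ∀ x, x ∉ K → u x = 0) : IsC1c Ω u := by
  have hts : tsupport u ⊆ K :=
    closure_minimal (fun x hx => by_contra fun h => hx (h0 x h)) hK.isClosed
  refine ⟨?_, HasCompactSupport.intro hK h0, hts.trans hKΩ⟩
  rw [contDiff_iff_contDiffAt]
  intro x
  by_cases hx : x ∈ Ω
  · exact hu.contDiffAt (hΩ.mem_nhds hx)
  · have hxK : x ∈ Kᶜ := fun h => hx (hKΩ h)
    refine (contDiffAt_const (c := (0 : ℝ))).congr_of_eventuallyEq ?_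
    filter_upwards [hK.isClosed.isOpen_compl.mem_nhds hxK] with y hy using h0 y hy

/-- Mollification: a `C¹_c(Ω)` function is a limit of test functions with supports in a common
compact set, with values and gradients converging pointwise and boundedly. -/
lemma IsC1c.exists_approx {Ω : Set (EuclideanSpace ℝ (Fin n))} (hΩ : IsOpen Ω)
    {u : EuclideanSpace ℝ (Fin n) → ℝ} (hu : IsC1c Ω u) :
    ∃ ψ : ℕ → EuclideanSpace ℝ (Fin n) → ℝ, ∃ K ⊆ Ω, IsCompact K ∧ ∃ C : ℝ,
      (∀ j, IsTestFun Ω (ψ j)) ∧ (∀ j, tsupport (ψ j) ⊆ K) ∧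
      (∀ j x, |ψ j x| ≤ C) ∧ (∀ j x, ‖gradient (ψ j) x‖ ≤ C) ∧
      (∀ x, Tendsto (fun j => ψ j x) atTop (𝓝 (u x))) ∧
      (∀ x, Tendsto (fun j => gradient (ψ j) x) atTop (𝓝 (gradient u x))) ∧
      ((∀ x, 0 ≤ u x) → ∀ j x, 0 ≤ ψ j x) := by
  obtain ⟨δ, hδ, hδΩ⟩ := hu.compact.isCompact.exists_cthickening_subset_open hΩ hu.subset
  let b : ℕ → ContDiffBump (0 : EuclideanSpace ℝ (Fin n)) := fun j =>
    ⟨δ / (j + 1) / 2, δ / (j + 1), by positivity, by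
      have : 0 < δ / ((j : ℝ) + 1) := by positivity
      linarith⟩
  have hb : Tendsto (fun j => (b j).rOut) atTop (𝓝 0) := by
    have : Tendsto (fun j : ℕ => δ / ((j : ℝ) + 1)) atTop (𝓝 0) := by
      have h := (tendsto_one_div_add_atTop_nhds_zero_nat (𝕜 := ℝ)).const_mul δ
      simpa [div_eq_mul_inv] using h
    exact this
  have hbδ : ∀ j, (b j).rOut ≤ δ := fun j => by
    change δ / ((j : ℝ) + 1) ≤ δ
    exact div_le_self hδ.le (by linarith [(Nat.cast_nonneg j : (0 : ℝ) ≤ j)])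
  have hcont : Continuous (fderiv ℝ u) := hu.contDiff.continuous_fderiv one_ne_zero
  obtain ⟨C₁, hC₁⟩ := hu.contDiff.continuous.bounded_above_of_compact_support hu.compact
  obtain ⟨C₂, hC₂⟩ := hcont.bounded_above_of_compact_support (hu.compact.fderiv ℝ)
  let ψ : ℕ → EuclideanSpace ℝ (Fin n) → ℝ := fun j =>
    ((b j).normed volume ⋆[ContinuousLinearMap.lsmul ℝ ℝ, volume] u)
  have hfd : ∀ j x, fderiv ℝ (ψ j) x =
      ((b j).normed volume ⋆[ContinuousLinearMap.lsmul ℝ ℝ, volume] (fderiv ℝ u)) x := by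
    intro j x
    exact (hu.compact.hasFDerivAt_convolution_right (ContinuousLinearMap.lsmul ℝ ℝ)
      ((b j).continuous_normed.locallyIntegrable) hu.contDiff x).fderiv
  have hsupp : ∀ j, tsupport (ψ j) ⊆ Metric.cthickening δ (tsupport u) := by
    intro j
    refine closure_minimal ?_ Metric.isClosed_cthickening
    refine (support_convolution_subset _).trans ?_
    rw [(b j).support_normed_eq]
    rintro _ ⟨y, hy, z, hz, rfl⟩
    refine Metric.mem_cthickening_of_dist_le _ z _ _ (subset_tsupport _ hz) ?_
    simp only [Metric.mem_ball, dist_zero_right] at hy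
    simpa [dist_eq_norm] using hy.le.trans (hbδ j)
  have hKc : IsCompact (Metric.cthickening δ (tsupport u)) := hu.compact.isCompact.cthickening
  refine ⟨ψ, _, hδΩ, hKc, max (3 * C₁) (3 * C₂), ?_, hsupp, ?_, ?_, ?_, ?_, ?_⟩
  · intro j
    refine ⟨?_, HasCompactSupport.of_support_subset_isCompact hKc
      ((subset_tsupport _).trans (hsupp j)), (hsupp j).trans hδΩ⟩
    exact (b j).hasCompactSupport_normed.contDiff_convolution_left _ (b j).contDiff_normed
      hu.contDiff.continuous.locallyIntegrable
  · intro j x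
    refine le_trans ?_ (le_max_left _ _)
    have h := (b j).dist_normed_convolution_le (μ := volume) (x₀ := x) (ε := 2 * C₁)
      hu.contDiff.continuous.aestronglyMeasurable (fun y _ => by
        rw [dist_eq_norm]
        linarith [norm_sub_le (u y) (u x), hC₁ y, hC₁ x])
    rw [dist_eq_norm] at h
    have h2 := norm_le_norm_add_norm_sub' (ψ j x) (u x)
    rw [← Real.norm_eq_abs]
    linarith [hC₁ x]
  · intro j x
    refine le_trans ?_ (le_max_right _ _)
    have h := (b j).dist_normed_convolution_le (μ := volume) (x₀ := x) (ε := 2 * C₂)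
      hcont.aestronglyMeasurable (fun y _ => by
        rw [dist_eq_norm]
        linarith [norm_sub_le (fderiv ℝ u y) (fderiv ℝ u x), hC₂ y, hC₂ x])
    rw [dist_eq_norm, ← hfd] at h
    have h2 := norm_le_norm_add_norm_sub' (fderiv ℝ (ψ j) x) (fderiv ℝ u x)
    rw [norm_gradient]
    linarith [hC₂ x]
  · intro x
    exact ContDiffBump.convolution_tendsto_right_of_continuous hb hu.contDiff.continuous x
  · intro x
    have h := ContDiffBump.convolution_tendsto_right_of_continuous (μ := volume) hb hcont x
    simp only [← hfd] at h
    exact ((InnerProductSpace.toDual ℝ _).symm.continuous.tendsto _).comp h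
  · intro h0 j x
    exact integral_nonneg fun y => mul_nonneg ((b j).nonneg_normed y) (h0 _)

end Gradient

/-! ### The weak equation with `C¹` test functions -/

section Setup

variable {n : ℕ}

/-- The standing assumptions: `G` is a positive `C¹` solution of `Q_{p,A,V}(G) = φ` that vanishes
at infinity in `Ω` and for which `V G^{p-1}` is integrable with negative integral. -/
structure HardySetup (Ω : Set (EuclideanSpace ℝ (Fin n)))
    (A : EuclideanSpace ℝ (Fin n) → Matrix (Fin n) (Fin n) ℝ) (p : ℝ)
    (V φ G : EuclideanSpace ℝ (Fin n) → ℝ) : Prop where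
  isOpen : IsOpen Ω
  one_lt : 1 < p
  ell : IsEllipticMatrix Ω A
  isTest : IsTestFun Ω φ
  nonneg : ∀ x, 0 ≤ φ x
  ne : ∃ x, φ x ≠ 0
  contDiffOn : ContDiffOn ℝ 1 G Ω
  pos : ∀ x ∈ Ω, 0 < G x
  sol : IsWeakSolution A p V φ Ω G
  vanish : TendstoZeroAtInfinityIn Ω Ω G
  integrable : IntegrableOn (fun x => V x * G x ^ (p - 1)) Ω
  neg : ∫ x in Ω, V x * G x ^ (p - 1) < 0

variable {Ω : Set (EuclideanSpace ℝ (Fin n))}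
  {A : EuclideanSpace ℝ (Fin n) → Matrix (Fin n) (Fin n) ℝ} {p : ℝ}
  {V φ G : EuclideanSpace ℝ (Fin n) → ℝ}

lemma tendsto_aInner {x ξ η : EuclideanSpace ℝ (Fin n)} {ξ' η' : ℕ → EuclideanSpace ℝ (Fin n)}
    (hξ : Tendsto ξ' atTop (𝓝 ξ)) (hη : Tendsto η' atTop (𝓝 η)) :
    Tendsto (fun j => aInner A x (ξ' j) (η' j)) atTop (𝓝 (aInner A x ξ η)) := by
  unfold aInner
  refine tendsto_finsetSum _ fun i _ => tendsto_finsetSum _ fun j _ => ?_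
  refine (tendsto_const_nhds.mul ?_).mul ?_
  · exact ((PiLp.continuous_apply 2 _ j).tendsto ξ).comp hξ
  · exact ((PiLp.continuous_apply 2 _ i).tendsto η).comp hη

/-- A continuous function on `Ω` vanishing off a compact subset of `Ω` is integrable. -/
lemma integrableOn_of_continuousOn_of_zero {K : Set (EuclideanSpace ℝ (Fin n))}
    (hΩ : IsOpen Ω) (hK : IsCompact K) (hKΩ : K ⊆ Ω)
    {f : EuclideanSpace ℝ (Fin n) → ℝ} (hf : ContinuousOn f Ω) (h0 : ∀ x ∈ Ω, x ∉ K → f x = 0) :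
    IntegrableOn f Ω :=
  ((hf.mono hKΩ).integrableOn_compact hK).of_forall_sdiff_eq_zero hΩ.measurableSet
    fun x hx => h0 x hx.1 hx.2

lemma exists_aNorm_le (hA : IsEllipticMatrix Ω A) {K : Set (EuclideanSpace ℝ (Fin n))}
    (hK : IsCompact K) (hKΩ : K ⊆ Ω) :
    ∃ C : ℝ, 0 ≤ C ∧ ∀ x ∈ K, ∀ ξ, aNorm A x ξ ≤ C * ‖ξ‖ := by
  obtain ⟨Θ, hΘ, h⟩ := hA.elliptic K hKΩ hK
  refine ⟨√Θ, Real.sqrt_nonneg _, fun x hx ξ => ?_⟩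
  calc aNorm A x ξ ≤ √(Θ * ‖ξ‖ ^ 2) := Real.sqrt_le_sqrt (h x hx ξ).2
    _ = √Θ * ‖ξ‖ := by rw [Real.sqrt_mul hΘ.le, Real.sqrt_sq (norm_nonneg _)]

namespace HardySetup

variable (S : HardySetup Ω A p V φ G)
include S

lemma continuousOn_grad : ContinuousOn (gradient G) Ω := S.contDiffOn.continuousOn_gradient S.isOpen

lemma continuousOn_N : ContinuousOn (fun x => aNorm A x (gradient G x)) Ω :=
  S.ell.continuousOn_aNorm S.isOpen S.continuousOn_grad

lemma continuousOn_rpow (q : ℝ) : ContinuousOn (fun x => G x ^ q) Ω :=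
  S.contDiffOn.continuousOn.rpow_const fun x hx => Or.inl (S.pos x hx).ne'

lemma contDiffOn_rpow (q : ℝ) : ContDiffOn ℝ 1 (fun x => G x ^ q) Ω :=
  S.contDiffOn.rpow_const_of_ne fun x hx => (S.pos x hx).ne'

lemma integrableOn_V {K : Set (EuclideanSpace ℝ (Fin n))} (hK : IsCompact K) (hKΩ : K ⊆ Ω) :
    IntegrableOn V K := by
  have h := (S.integrable.mono_set hKΩ).mul_continuousOn
    ((S.continuousOn_rpow (1 - p)).mono hKΩ) hK
  refine h.congr_fun (fun x hx => ?_) hK.measurableSet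
  have hG := S.pos x (hKΩ hx)
  change V x * G x ^ (p - 1) * G x ^ (1 - p) = V x
  rw [mul_assoc, ← Real.rpow_add hG]
  simp

lemma integrableOn_V_mul {K : Set (EuclideanSpace ℝ (Fin n))} (hK : IsCompact K) (hKΩ : K ⊆ Ω)
    {f : EuclideanSpace ℝ (Fin n) → ℝ} (hf : ContinuousOn f Ω) (h0 : ∀ x ∈ Ω, x ∉ K → f x = 0) :
    IntegrableOn (fun x => V x * f x) Ω :=
  ((S.integrableOn_V hK hKΩ).mul_continuousOn (hf.mono hKΩ) hK).of_forall_sdiff_eq_zero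
    S.isOpen.measurableSet fun x hx => by simp [h0 x hx.1 hx.2]

lemma aestronglyMeasurable_flux {η : EuclideanSpace ℝ (Fin n) → EuclideanSpace ℝ (Fin n)}
    (hη : ContinuousOn η Ω) :
    AEStronglyMeasurable (fun x => aNorm A x (gradient G x) ^ (p - 2) *
      aInner A x (gradient G x) (η x)) (volume.restrict Ω) := by
  refine AEStronglyMeasurable.mul ?_ ?_
  · exact ((S.continuousOn_N.aemeasurable S.isOpen.measurableSet).pow_const _).aestronglyMeasurable
  · exact (S.ell.continuousOn_aInner S.isOpen S.continuousOn_grad hη).aestronglyMeasurable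
      S.isOpen.measurableSet

lemma continuousOn_Npow {q : ℝ} (hq : 0 ≤ q) :
    ContinuousOn (fun x => aNorm A x (gradient G x) ^ q) Ω :=
  S.continuousOn_N.rpow_const fun _ _ => Or.inr hq

lemma integrableOn_flux {u : EuclideanSpace ℝ (Fin n) → ℝ} (hu : IsC1c Ω u) :
    IntegrableOn (fun x => aNorm A x (gradient G x) ^ (p - 2) *
      aInner A x (gradient G x) (gradient u x)) Ω := by
  have hgu : ContinuousOn (gradient u) Ω := hu.contDiff.contDiffOn.continuousOn_gradient S.isOpen
  have hb : IntegrableOn (fun x => aNorm A x (gradient G x) ^ (p - 1) *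
      aNorm A x (gradient u x)) Ω := by
    refine integrableOn_of_continuousOn_of_zero S.isOpen hu.compact.isCompact hu.subset
      ((S.continuousOn_Npow (by linarith [S.one_lt])).mul
        (S.ell.continuousOn_aNorm S.isOpen hgu)) fun x _ hx => ?_
    rw [gradient_eq_zero_of_notMem_tsupport hx, aNorm_zero, mul_zero]
  refine hb.mono' (S.aestronglyMeasurable_flux hgu) ?_
  refine (ae_restrict_iff' S.isOpen.measurableSet).2 (Eventually.of_forall fun x hx => ?_)
  exact S.ell.abs_flux_le hx p _ _

/-- The weak equation for `G` may be tested with `C¹_c` functions. -/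
lemma eq_C1c {u : EuclideanSpace ℝ (Fin n) → ℝ} (hu : IsC1c Ω u) :
    (∫ x in Ω, aNorm A x (gradient G x) ^ (p - 2) *
        aInner A x (gradient G x) (gradient u x))
      + (∫ x in Ω, V x * G x ^ (p - 1) * u x) = ∫ x in Ω, φ x * u x := by
  obtain ⟨ψ, K, hKΩ, hK, C, hψ, hψK, hC, hCg, hlim, hlimg, -⟩ := hu.exists_approx S.isOpen
  have hmeas := S.isOpen.measurableSet
  have hC0 : 0 ≤ C := (abs_nonneg _).trans (hC 0 0)
  have hz : ∀ j x, x ∉ K → ψ j x = 0 := fun j x hx =>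
    image_eq_zero_of_notMem_tsupport fun h => hx (hψK j h)
  have hzg : ∀ j x, x ∉ K → gradient (ψ j) x = 0 := fun j x hx =>
    gradient_eq_zero_of_notMem_tsupport fun h => hx (hψK j h)
  have h1 : Tendsto (fun j => ∫ x in Ω, aNorm A x (gradient G x) ^ (p - 2) *
        aInner A x (gradient G x) (gradient (ψ j) x)) atTop
      (𝓝 (∫ x in Ω, aNorm A x (gradient G x) ^ (p - 2) *
        aInner A x (gradient G x) (gradient u x))) := by
    obtain ⟨D, hD0, hD⟩ := exists_aNorm_le S.ell hK hKΩ
    refine tendsto_integral_of_dominated_convergence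
      (K.indicator fun x => aNorm A x (gradient G x) ^ (p - 1) * (D * C)) ?_ ?_ ?_ ?_
    · intro j
      exact S.aestronglyMeasurable_flux
        ((hψ j).isC1c.contDiff.contDiffOn.continuousOn_gradient S.isOpen)
    · refine ((integrable_indicator_iff hK.measurableSet).2 ?_).integrableOn
      exact (((S.continuousOn_Npow (by linarith [S.one_lt])).mul continuousOn_const).mono
        hKΩ).integrableOn_compact hK
    · intro j
      refine (ae_restrict_iff' hmeas).2 (Eventually.of_forall fun x hx => ?_)
      by_cases hxK : x ∈ K
      · rw [indicator_of_mem hxK, Real.norm_eq_abs]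
        refine (S.ell.abs_flux_le hx p _ _).trans ?_
        refine mul_le_mul_of_nonneg_left ?_ (Real.rpow_nonneg (aNorm_nonneg _ _) _)
        exact (hD x hxK _).trans (mul_le_mul_of_nonneg_left (hCg j x) hD0)
      · rw [indicator_of_notMem hxK, hzg j x hxK, aInner_zero_right, mul_zero, norm_zero]
    · refine Eventually.of_forall fun x => ?_
      exact tendsto_const_nhds.mul (tendsto_aInner tendsto_const_nhds (hlimg x))
  have h2 : Tendsto (fun j => ∫ x in Ω, V x * G x ^ (p - 1) * ψ j x) atTop
      (𝓝 (∫ x in Ω, V x * G x ^ (p - 1) * u x)) := by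
    refine tendsto_integral_of_dominated_convergence
      (fun x => |V x * G x ^ (p - 1)| * C) ?_ ?_ ?_ ?_
    · intro j
      exact S.integrable.aestronglyMeasurable.mul
        (hψ j).1.continuous.aestronglyMeasurable
    · exact S.integrable.abs.mul_const C
    · intro j
      refine Eventually.of_forall fun x => ?_
      rw [norm_mul, Real.norm_eq_abs, Real.norm_eq_abs]
      exact mul_le_mul_of_nonneg_left (hC j x) (abs_nonneg _)
    · exact Eventually.of_forall fun x => tendsto_const_nhds.mul (hlim x)
  have h3 : Tendsto (fun j => ∫ x in Ω, φ x * ψ j x) atTop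
      (𝓝 (∫ x in Ω, φ x * u x)) := by
    have hφi : Integrable φ := S.isTest.1.continuous.integrable_of_hasCompactSupport S.isTest.2.1
    refine tendsto_integral_of_dominated_convergence (fun x => |φ x| * C) ?_ ?_ ?_ ?_
    · intro j
      exact (S.isTest.1.continuous.mul (hψ j).1.continuous).aestronglyMeasurable
    · exact (hφi.abs.mul_const C).integrableOn
    · intro j
      refine Eventually.of_forall fun x => ?_
      rw [norm_mul, Real.norm_eq_abs, Real.norm_eq_abs]
      exact mul_le_mul_of_nonneg_left (hC j x) (abs_nonneg _)
    · exact Eventually.of_forall fun x => tendsto_const_nhds.mul (hlim x)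
  refine tendsto_nhds_unique (h1.add h2) ?_
  simpa only [S.sol _ (hψ _)] using h3

end HardySetup

end Setup

/-! ### The Hardy weight, the energy identity and the Hardy inequality -/

/-- The ground state exponent `(p-1)/p`; note `a^{p-1} = 1/c_p`. -/
noncomputable def gsExp (p : ℝ) : ℝ := (p - 1) / p

lemma gsExp_pos {p : ℝ} (hp : 1 < p) : 0 < gsExp p := div_pos (by linarith) (by linarith)

lemma gsExp_mul {p : ℝ} (hp : 1 < p) : gsExp p * p = p - 1 := by
  have : p ≠ 0 := by linarith
  unfold gsExp
  field_simp

lemma div_hardyConst {p : ℝ} (hp : 1 < p) (t : ℝ) :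
    t / (p / (p - 1)) ^ (p - 1) = gsExp p ^ (p - 1) * t := by
  have h : p / (p - 1) = (gsExp p)⁻¹ := by rw [gsExp, inv_div]
  rw [h, Real.inv_rpow (gsExp_pos hp).le, div_inv_eq_mul, mul_comm]

/-- The Bregman divergence of `t ↦ t^p` on `[0, ∞)`. -/
noncomputable def breg (p y x : ℝ) : ℝ := y ^ p + (p - 1) * x ^ p - p * x ^ (p - 1) * y

lemma breg_nonneg {p x y : ℝ} (hp : 1 < p) (hx : 0 ≤ x) (hy : 0 ≤ y) : 0 ≤ breg p y x := by
  have hc : p.HolderConjugate (p / (p - 1)) := Real.HolderConjugate.conjExponent hp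
  have h := Real.young_inequality_of_nonneg hy (Real.rpow_nonneg hx (p - 1)) hc
  have h1 : p - 1 ≠ 0 := by linarith
  have hp0 : 0 < p := by linarith
  rw [← Real.rpow_mul hx, mul_div_cancel₀ _ h1] at h
  unfold breg
  have h2 : p * (y * x ^ (p - 1)) ≤ p * (y ^ p / p + x ^ p / (p / (p - 1))) :=
    mul_le_mul_of_nonneg_left h hp0.le
  have h3 : p * (y ^ p / p + x ^ p / (p / (p - 1))) = y ^ p + (p - 1) * x ^ p := by
    field_simp
  linarith

/-- Adding the two divergences `breg p y x + breg p x y` gives the bound. -/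
lemma breg_le {p x y : ℝ} (hp : 1 < p) (hx : 0 ≤ x) (hy : 0 ≤ y) :
    breg p y x ≤ p * (y ^ (p - 1) - x ^ (p - 1)) * (y - x) := by
  have h := breg_nonneg hp hy hx
  have e : ∀ t : ℝ, 0 ≤ t → t ^ p = t ^ (p - 1) * t := fun t ht => by
    rw [← Real.rpow_add_one' ht (by linarith)]
    congr 1
    ring
  unfold breg at *
  rw [e x hx, e y hy] at *
  linarith

section Energy

variable {n : ℕ} {Ω : Set (EuclideanSpace ℝ (Fin n))}
  {A : EuclideanSpace ℝ (Fin n) → Matrix (Fin n) (Fin n) ℝ} {p : ℝ}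
  {V φ G : EuclideanSpace ℝ (Fin n) → ℝ}

/-- The optimal weight `a^p |∇G|_A^p / G^p + a^{p-1} φ / G^{p-1}`, `a = (p-1)/p`. -/
noncomputable def hardyW (A : EuclideanSpace ℝ (Fin n) → Matrix (Fin n) (Fin n) ℝ) (p : ℝ)
    (φ G : EuclideanSpace ℝ (Fin n) → ℝ) (x : EuclideanSpace ℝ (Fin n)) : ℝ :=
  gsExp p ^ p * (aNorm A x (gradient G x) ^ p * G x ^ (-p)) +
    gsExp p ^ (p - 1) * (φ x * G x ^ (1 - p))

/-- The Picone integrand of `ψ` against `G^{(p-1)/p}`. -/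
noncomputable def picone (A : EuclideanSpace ℝ (Fin n) → Matrix (Fin n) (Fin n) ℝ) (p : ℝ)
    (G ψ : EuclideanSpace ℝ (Fin n) → ℝ) (x : EuclideanSpace ℝ (Fin n)) : ℝ :=
  aNorm A x (gradient ψ x) ^ p
    + (p - 1) * gsExp p ^ p * (|ψ x| ^ p * G x ^ (-p)) * aNorm A x (gradient G x) ^ p
    - p * gsExp p ^ (p - 1) * (|ψ x| ^ (p - 2) * ψ x * G x ^ (1 - p)) *
      (aNorm A x (gradient G x) ^ (p - 2) * aInner A x (gradient G x) (gradient ψ x))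

namespace HardySetup

variable (S : HardySetup Ω A p V φ G)
include S

lemma continuousOn_W : ContinuousOn (hardyW A p φ G) Ω := by
  have hp := S.one_lt
  unfold hardyW
  refine (continuousOn_const.mul ((S.continuousOn_Npow (by linarith)).mul
    (S.continuousOn_rpow _))).add (continuousOn_const.mul ?_)
  exact S.isTest.1.continuous.continuousOn.mul (S.continuousOn_rpow _)

lemma W_nonneg {x : EuclideanSpace ℝ (Fin n)} (hx : x ∈ Ω) : 0 ≤ hardyW A p φ G x := by
  have h1 := (gsExp_pos S.one_lt).le
  have h2 := (S.pos x hx).le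
  have h3 : 0 ≤ aNorm A x (gradient G x) := aNorm_nonneg _ _
  have h4 := S.nonneg x
  unfold hardyW
  positivity

lemma W_ne : ∃ x ∈ Ω, hardyW A p φ G x ≠ 0 := by
  obtain ⟨x, hx⟩ := S.ne
  have hxΩ : x ∈ Ω := S.isTest.2.2 (subset_tsupport _ hx)
  refine ⟨x, hxΩ, ne_of_gt ?_⟩
  have h1 := gsExp_pos S.one_lt
  have h2 := S.pos x hxΩ
  have h3 : 0 ≤ aNorm A x (gradient G x) := aNorm_nonneg _ _
  have h4 : 0 < φ x := lt_of_le_of_ne (S.nonneg x) (Ne.symm hx)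
  unfold hardyW
  positivity

lemma hasFDerivAt_G {x : EuclideanSpace ℝ (Fin n)} (hx : x ∈ Ω) :
    HasFDerivAt G (fderiv ℝ G x) x :=
  ((S.contDiffOn.differentiableOn one_ne_zero).differentiableAt
    (S.isOpen.mem_nhds hx)).hasFDerivAt

lemma hasFDerivAt_rpow {x : EuclideanSpace ℝ (Fin n)} (hx : x ∈ Ω) (q : ℝ) :
    HasFDerivAt (fun y => G y ^ q) ((q * G x ^ (q - 1)) • fderiv ℝ G x) x :=
  (S.hasFDerivAt_G hx).rpow_const (Or.inl (S.pos x hx).ne')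

lemma gradient_rpow {x : EuclideanSpace ℝ (Fin n)} (hx : x ∈ Ω) (q : ℝ) :
    gradient (fun y => G y ^ q) x = (q * G x ^ (q - 1)) • gradient G x := by
  rw [(S.hasFDerivAt_rpow hx q).gradient_eq_symm, map_smul, gradient]

/-- `C¹_c` functions stay in the class under multiplication by powers of `G`. -/
lemma isC1c_mul_rpow {u : EuclideanSpace ℝ (Fin n) → ℝ} (hu : IsC1c Ω u) (q : ℝ) :
    IsC1c Ω (fun x => u x * G x ^ q) := by
  refine IsC1c.of_contDiffOn S.isOpen hu.compact.isCompact hu.subset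
    (hu.contDiff.contDiffOn.mul (S.contDiffOn_rpow q)) fun x hx => ?_
  rw [image_eq_zero_of_notMem_tsupport hx, zero_mul]

lemma gradient_mul_rpow {u : EuclideanSpace ℝ (Fin n) → ℝ} (hu : IsC1c Ω u)
    {x : EuclideanSpace ℝ (Fin n)} (hx : x ∈ Ω) (q : ℝ) :
    gradient (fun y => u y * G y ^ q) x =
      (u x * (q * G x ^ (q - 1))) • gradient G x + G x ^ q • gradient u x := by
  have h : HasFDerivAt (fun y => u y * G y ^ q) _ x :=
    ((hu.contDiff.differentiable one_ne_zero x).hasFDerivAt).mul (S.hasFDerivAt_rpow hx q)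
  rw [h.gradient_eq_symm, map_add, map_smul, map_smul, map_smul, smul_smul, gradient, gradient]

omit S in
lemma isC1c_abs_rpow (hp : 1 < p) {u : EuclideanSpace ℝ (Fin n) → ℝ} (hu : IsC1c Ω u) (c : ℝ) :
    IsC1c Ω (fun x => c * |u x| ^ p) := by
  have hc : ContDiff ℝ 1 (fun x => c * |u x| ^ p) :=
    contDiff_const.mul (hu.contDiff.norm_rpow hp)
  have h0 : ∀ x, x ∉ tsupport u → c * |u x| ^ p = 0 := fun x hx => by
    rw [image_eq_zero_of_notMem_tsupport hx, abs_zero, Real.zero_rpow (by linarith), mul_zero]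
  have hts : tsupport (fun x => c * |u x| ^ p) ⊆ tsupport u :=
    closure_minimal (fun x hx => by_contra fun h => hx (h0 x h)) (isClosed_tsupport u)
  exact ⟨hc, HasCompactSupport.intro hu.compact.isCompact h0, hts.trans hu.subset⟩

omit S in
lemma gradient_abs_rpow (hp : 1 < p) {u : EuclideanSpace ℝ (Fin n) → ℝ} (hu : IsC1c Ω u) (c : ℝ)
    (x : EuclideanSpace ℝ (Fin n)) :
    gradient (fun y => c * |u y| ^ p) x = (c * (p * |u x| ^ (p - 2) * u x)) • gradient u x := by
  have h := ((hasDerivAt_abs_rpow (u x) hp).comp_hasFDerivAt x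
    (hu.contDiff.differentiable one_ne_zero x).hasFDerivAt).const_mul c
  have h2 := h.gradient_eq_symm
  rw [map_smul, map_smul, smul_smul] at h2
  exact h2

/-- The energy of `Q_{p,A,V/c_p - W}` is the integral of the Picone integrand: test the equation of
`G` with `a^{p-1} |ψ|^p G^{1-p}`. -/
lemma energy_eq {ψ : EuclideanSpace ℝ (Fin n) → ℝ} (hψ : IsC1c Ω ψ) :
    IntegrableOn (fun x => aNorm A x (gradient ψ x) ^ p +
      (gsExp p ^ (p - 1) * V x) * |ψ x| ^ p) Ω ∧
    IntegrableOn (fun x => hardyW A p φ G x * |ψ x| ^ p) Ω ∧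
    ∫ x in Ω, (aNorm A x (gradient ψ x) ^ p +
      (gsExp p ^ (p - 1) * V x - hardyW A p φ G x) * |ψ x| ^ p) =
    ∫ x in Ω, picone A p G ψ x := by
  have hp := S.one_lt
  set a := gsExp p with ha
  have hap : 0 < a := gsExp_pos hp
  have hgψ : ContinuousOn (gradient ψ) Ω := hψ.contDiff.contDiffOn.continuousOn_gradient S.isOpen
  have hK := hψ.compact.isCompact
  have hψ0 : ∀ x ∈ Ω, x ∉ tsupport ψ → |ψ x| ^ p = 0 := fun x _ hx => by
    rw [image_eq_zero_of_notMem_tsupport hx, abs_zero, Real.zero_rpow (by linarith)]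
  have hψc : ContinuousOn (fun x => |ψ x| ^ p) Ω :=
    hψ.contDiff.continuous.abs.continuousOn.rpow_const fun _ _ => Or.inr (by linarith)
  have i1 : IntegrableOn (fun x => aNorm A x (gradient ψ x) ^ p) Ω := by
    refine integrableOn_of_continuousOn_of_zero S.isOpen hK hψ.subset
      ((S.ell.continuousOn_aNorm S.isOpen hgψ).rpow_const fun _ _ => Or.inr (by linarith))
      fun x _ hx => ?_
    rw [gradient_eq_zero_of_notMem_tsupport hx, aNorm_zero, Real.zero_rpow (by linarith)]
  have i2 : IntegrableOn (fun x => (a ^ (p - 1) * V x) * |ψ x| ^ p) Ω := by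
    have h : IntegrableOn (fun x => a ^ (p - 1) * (V x * |ψ x| ^ p)) Ω :=
      (S.integrableOn_V_mul hK hψ.subset hψc hψ0).const_mul _
    simpa only [mul_assoc] using h
  have i3 : IntegrableOn (fun x => hardyW A p φ G x * |ψ x| ^ p) Ω :=
    integrableOn_of_continuousOn_of_zero S.isOpen hK hψ.subset (S.continuousOn_W.mul hψc)
      fun x hx hx' => by rw [hψ0 x hx hx', mul_zero]
  refine ⟨i1.add i2, i3, ?_⟩
  have hv := isC1c_abs_rpow hp hψ (a ^ (p - 1))
  have hu := S.isC1c_mul_rpow hv (1 - p)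
  set u : EuclideanSpace ℝ (Fin n) → ℝ := fun x => a ^ (p - 1) * |ψ x| ^ p * G x ^ (1 - p)
    with hudef
  have heq := S.eq_C1c hu
  have j1 := S.integrableOn_flux hu
  have huc : ContinuousOn u Ω := hu.contDiff.continuous.continuousOn
  have hu0 : ∀ x ∈ Ω, x ∉ tsupport u → u x = 0 := fun x _ hx =>
    image_eq_zero_of_notMem_tsupport hx
  have j2 : IntegrableOn (fun x => V x * G x ^ (p - 1) * u x) Ω := by
    simp only [mul_assoc]
    exact S.integrableOn_V_mul hu.compact.isCompact hu.subset ((S.continuousOn_rpow _).mul huc)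
      fun x hx hx' => by rw [hu0 x hx hx', mul_zero]
  have j3 : IntegrableOn (fun x => φ x * u x) Ω :=
    integrableOn_of_continuousOn_of_zero S.isOpen hu.compact.isCompact hu.subset
      (S.isTest.1.continuous.continuousOn.mul huc) fun x hx hx' => by rw [hu0 x hx hx', mul_zero]
  have j12 : IntegrableOn (fun x => aNorm A x (gradient G x) ^ (p - 2) *
      aInner A x (gradient G x) (gradient u x) + V x * G x ^ (p - 1) * u x) Ω := j1.add j2
  have j123 : IntegrableOn (fun x => aNorm A x (gradient G x) ^ (p - 2) *
      aInner A x (gradient G x) (gradient u x) + V x * G x ^ (p - 1) * u x - φ x * u x) Ω :=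
    j12.sub j3
  have hbr : ∫ x in Ω, (aNorm A x (gradient G x) ^ (p - 2) *
        aInner A x (gradient G x) (gradient u x) + V x * G x ^ (p - 1) * u x - φ x * u x) = 0 := by
    rw [integral_sub j12 j3, integral_add j1 j2, heq, sub_self]
  have hpt : ∀ x ∈ Ω, aNorm A x (gradient ψ x) ^ p +
      (a ^ (p - 1) * V x - hardyW A p φ G x) * |ψ x| ^ p =
      picone A p G ψ x + (aNorm A x (gradient G x) ^ (p - 2) *
        aInner A x (gradient G x) (gradient u x) + V x * G x ^ (p - 1) * u x - φ x * u x) := by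
    intro x hx
    have hG := S.pos x hx
    rw [S.gradient_mul_rpow hv hx, gradient_abs_rpow hp hψ, aInner_add_right, aInner_smul_right,
      aInner_smul_right, aInner_smul_right, mul_add, ← mul_assoc,
      mul_comm (aNorm A x (gradient G x) ^ (p - 2)),
      mul_assoc (a ^ (p - 1) * |ψ x| ^ p * _), S.ell.flux_self hx hp]
    have e1 : G x ^ (p - 1) * G x ^ (1 - p) = 1 := by
      rw [← Real.rpow_add hG]
      simp
    have e2 : G x ^ (1 - p - 1) = G x ^ (-p) := by
      congr 1
      ring
    have e3 : a ^ p = a ^ (p - 1) * a := by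
      rw [← Real.rpow_add_one hap.ne']
      congr 1
      ring
    have e4 : (p - 1) = a * p := (gsExp_mul hp).symm
    rw [e2]
    simp only [hudef, hardyW, picone, ← ha]
    rw [e3]
    generalize hN : aNorm A x (gradient G x) ^ p = N
    generalize aNorm A x (gradient G x) ^ (p - 2) = N2
    generalize aInner A x (gradient G x) (gradient ψ x) = I
    generalize |ψ x| ^ (p - 2) = P2
    generalize |ψ x| ^ p = P
    generalize G x ^ (-p) = Gp at *
    generalize G x ^ (1 - p) = G1 at *
    generalize G x ^ (p - 1) = G2 at *
    generalize a ^ (p - 1) = c at *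
    have e5 : V x * G2 * (c * P * G1) = V x * c * P := by
      calc V x * G2 * (c * P * G1) = V x * c * P * (G2 * G1) := by ring
        _ = _ := by rw [e1, mul_one]
    rw [e5]
    linear_combination (c * P * Gp * N) * e4
  have hcongr : ∫ x in Ω, picone A p G ψ x = ∫ x in Ω, ((aNorm A x (gradient ψ x) ^ p +
      (a ^ (p - 1) * V x - hardyW A p φ G x) * |ψ x| ^ p) -
      (aNorm A x (gradient G x) ^ (p - 2) *
        aInner A x (gradient G x) (gradient u x) + V x * G x ^ (p - 1) * u x - φ x * u x)) := by
    refine setIntegral_congr_fun S.isOpen.measurableSet fun x hx => ?_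
    rw [hpt x hx]
    ring
  have i4 : IntegrableOn (fun x => aNorm A x (gradient ψ x) ^ p +
      (a ^ (p - 1) * V x - hardyW A p φ G x) * |ψ x| ^ p) Ω := by
    refine ((i1.add i2).sub i3).congr (Eventually.of_forall fun x => ?_)
    simp only [Pi.add_apply, Pi.sub_apply]
    ring
  rw [hcongr, integral_sub i4 j123, hbr, sub_zero]

lemma picone_nonneg (ψ : EuclideanSpace ℝ (Fin n) → ℝ) {x : EuclideanSpace ℝ (Fin n)}
    (hx : x ∈ Ω) : 0 ≤ picone A p G ψ x := by
  have hp := S.one_lt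
  have ha := gsExp_pos hp
  have hG := S.pos x hx
  set N := aNorm A x (gradient G x) with hN
  set Y := aNorm A x (gradient ψ x) with hY
  have hN0 : 0 ≤ N := aNorm_nonneg _ _
  have hY0 : 0 ≤ Y := aNorm_nonneg _ _
  have hY1 := breg_nonneg (x := gsExp p * |ψ x| * (G x)⁻¹ * N) hp (by positivity) hY0
  have hflux := S.ell.abs_flux_le hx p (gradient G x) (gradient ψ x)
  have e1 : ∀ q : ℝ, (gsExp p * |ψ x| * (G x)⁻¹ * N) ^ q =
      gsExp p ^ q * |ψ x| ^ q * G x ^ (-q) * N ^ q := by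
    intro q
    rw [Real.mul_rpow (by positivity) hN0, Real.mul_rpow (by positivity) (by positivity),
      Real.mul_rpow ha.le (abs_nonneg _), Real.inv_rpow hG.le, Real.rpow_neg hG.le]
  unfold breg at hY1
  rw [e1, e1] at hY1
  have e2 : |(|ψ x| ^ (p - 2) * ψ x)| = |ψ x| ^ (p - 1) := by
    rw [abs_mul, abs_of_nonneg (Real.rpow_nonneg (abs_nonneg _) _),
      ← Real.rpow_add_one' (abs_nonneg _) (by linarith)]
    congr 1
    ring
  have e3 : |ψ x| ^ (p - 2) * ψ x * G x ^ (1 - p) *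
      (N ^ (p - 2) * aInner A x (gradient G x) (gradient ψ x)) ≤
      |ψ x| ^ (p - 1) * G x ^ (1 - p) * (N ^ (p - 1) * Y) := by
    refine (le_abs_self _).trans ?_
    rw [abs_mul, abs_mul, e2, abs_of_nonneg (Real.rpow_nonneg hG.le _)]
    gcongr
  have e4 : p * gsExp p ^ (p - 1) * (|ψ x| ^ (p - 2) * ψ x * G x ^ (1 - p) *
      (N ^ (p - 2) * aInner A x (gradient G x) (gradient ψ x))) ≤
      p * gsExp p ^ (p - 1) * (|ψ x| ^ (p - 1) * G x ^ (1 - p) * (N ^ (p - 1) * Y)) :=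
    mul_le_mul_of_nonneg_left e3 (by positivity)
  unfold picone
  rw [neg_sub] at hY1
  rw [← hN, ← hY]
  linarith

/-- The Hardy inequality with weight `hardyW`. -/
lemma hardy {ψ : EuclideanSpace ℝ (Fin n) → ℝ} (hψ : IsC1c Ω ψ) :
    ∫ x in Ω, hardyW A p φ G x * |ψ x| ^ p ≤
      ∫ x in Ω, (aNorm A x (gradient ψ x) ^ p + (gsExp p ^ (p - 1) * V x) * |ψ x| ^ p) := by
  obtain ⟨i1, i2, h⟩ := S.energy_eq hψ
  rw [← sub_nonneg, ← integral_sub i1 i2]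
  have h0 : 0 ≤ ∫ x in Ω, picone A p G ψ x :=
    setIntegral_nonneg S.isOpen.measurableSet fun x hx => S.picone_nonneg ψ hx
  rw [← h] at h0
  refine h0.trans_eq (integral_congr_ae (Eventually.of_forall fun x => ?_))
  simp only
  ring

/-- `G^{(p-1)/p}` solves `Q_{p,A,V/c_p - W} = 0`: test the equation of `G` with
`a^{p-1} G^{-a} ψ`. -/
lemma ground_state :
    IsWeakSolution A p (fun x => gsExp p ^ (p - 1) * V x - hardyW A p φ G x) (fun _ => (0 : ℝ)) Ω
      (fun x => G x ^ gsExp p) := by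
  intro ψ hψt
  have hψ := hψt.isC1c
  have hp := S.one_lt
  set a := gsExp p with ha
  have hap : 0 < a := gsExp_pos hp
  have hu := S.isC1c_mul_rpow hψ (-a)
  set u : EuclideanSpace ℝ (Fin n) → ℝ := fun x => ψ x * G x ^ (-a) with hudef
  have heq := S.eq_C1c hu
  have j1 := S.integrableOn_flux hu
  have huc : ContinuousOn u Ω := hu.contDiff.continuous.continuousOn
  have hu0 : ∀ x ∈ Ω, x ∉ tsupport u → u x = 0 := fun x _ hx =>
    image_eq_zero_of_notMem_tsupport hx
  have j2 : IntegrableOn (fun x => V x * G x ^ (p - 1) * u x) Ω := by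
    simp only [mul_assoc]
    exact S.integrableOn_V_mul hu.compact.isCompact hu.subset ((S.continuousOn_rpow _).mul huc)
      fun x hx hx' => by rw [hu0 x hx hx', mul_zero]
  have j3 : IntegrableOn (fun x => φ x * u x) Ω :=
    integrableOn_of_continuousOn_of_zero S.isOpen hu.compact.isCompact hu.subset
      (S.isTest.1.continuous.continuousOn.mul huc) fun x hx hx' => by rw [hu0 x hx hx', mul_zero]
  have j4 : IntegrableOn (fun x => a * (aNorm A x (gradient G x) ^ p * G x ^ (-1 : ℝ) * u x)) Ω := by
    have h : IntegrableOn (fun x => aNorm A x (gradient G x) ^ p * G x ^ (-1 : ℝ) * u x) Ω :=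
      integrableOn_of_continuousOn_of_zero S.isOpen hu.compact.isCompact hu.subset
        (((S.continuousOn_Npow (by linarith)).mul (S.continuousOn_rpow _)).mul huc)
        fun x hx hx' => by rw [hu0 x hx hx', mul_zero]
    exact h.const_mul a
  have j23 : IntegrableOn (fun x => V x * G x ^ (p - 1) * u x - φ x * u x) Ω := j2.sub j3
  have hc1 : ∀ x ∈ Ω, aNorm A x (gradient (fun y => G y ^ a) x) ^ (p - 2) *
      aInner A x (gradient (fun y => G y ^ a) x) (gradient ψ x) =
      a ^ (p - 1) * (aNorm A x (gradient G x) ^ (p - 2) *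
        aInner A x (gradient G x) (gradient u x) +
        a * (aNorm A x (gradient G x) ^ p * G x ^ (-1 : ℝ) * u x)) := by
    intro x hx
    have hG := S.pos x hx
    have hc : 0 < a * G x ^ (a - 1) := by positivity
    rw [S.gradient_rpow hx, aNorm_smul, aInner_smul_left, abs_of_pos hc,
      Real.mul_rpow hc.le (aNorm_nonneg _ _), S.gradient_mul_rpow hψ hx, aInner_add_right,
      aInner_smul_right, aInner_smul_right, ← S.ell.flux_self hx hp]
    have e1 : (a * G x ^ (a - 1)) ^ (p - 2) * (a * G x ^ (a - 1)) = a ^ (p - 1) * G x ^ (-a) := by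
      rw [← Real.rpow_add_one hc.ne', Real.mul_rpow hap.le (Real.rpow_nonneg hG.le _),
        ← Real.rpow_mul hG.le]
      have h1 : p - 2 + 1 = p - 1 := by ring
      have h2 : (a - 1) * (p - 2 + 1) = -a := by
        have := gsExp_mul hp
        rw [← ha] at this
        linear_combination this
      rw [h2, h1]
    have e2 : G x ^ (-a - 1) = G x ^ (-a) * G x ^ (-1 : ℝ) := by
      rw [← Real.rpow_add hG]
      rfl
    rw [e2]
    simp only [hudef]
    linear_combination (aNorm A x (gradient G x) ^ (p - 2) *
      aInner A x (gradient G x) (gradient ψ x)) * e1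
  have hc2 : ∀ x ∈ Ω, (a ^ (p - 1) * V x - hardyW A p φ G x) * (G x ^ a) ^ (p - 1) * ψ x =
      a ^ (p - 1) * (V x * G x ^ (p - 1) * u x - φ x * u x -
        a * (aNorm A x (gradient G x) ^ p * G x ^ (-1 : ℝ) * u x)) := by
    intro x hx
    have hG := S.pos x hx
    have h1 := gsExp_mul hp
    rw [← ha] at h1
    have e1 : (G x ^ a) ^ (p - 1) = G x ^ (p - 1) * G x ^ (-a) := by
      rw [← Real.rpow_mul hG.le, ← Real.rpow_add hG]
      congr 1
      linear_combination h1
    have e2 : G x ^ (1 - p) * G x ^ (p - 1) = 1 := by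
      rw [← Real.rpow_add hG]
      simp
    have e3 : G x ^ (-p) * G x ^ (p - 1) = G x ^ (-1 : ℝ) := by
      rw [← Real.rpow_add hG]
      congr 1
      ring
    have e4 : a ^ p = a ^ (p - 1) * a := by
      rw [← Real.rpow_add_one hap.ne']
      congr 1
      ring
    rw [e1]
    simp only [hudef, hardyW, ← ha]
    rw [e4]
    linear_combination (-a ^ (p - 1) * φ x * G x ^ (-a) * ψ x) * e2 -
      (a ^ (p - 1) * a * aNorm A x (gradient G x) ^ p * G x ^ (-a) * ψ x) * e3
  rw [setIntegral_congr_fun S.isOpen.measurableSet hc1,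
    setIntegral_congr_fun S.isOpen.measurableSet hc2, integral_const_mul, integral_const_mul,
    integral_add j1 j4, integral_sub j23 j4, integral_sub j2 j3]
  simp only [zero_mul, integral_zero]
  linear_combination a ^ (p - 1) * heq

end HardySetup

end Energy

/-! ### The logarithmic cut-off -/

section CutOff

open Real (smoothTransition)

lemma deriv_smoothTransition_nonneg (s : ℝ) : 0 ≤ deriv smoothTransition s :=
  smoothTransition.monotone.deriv_nonneg

lemma deriv_smoothTransition_of_nonpos {s : ℝ} (hs : s ≤ 0) : deriv smoothTransition s = 0 := by
  refine IsLocalMin.deriv_eq_zero (Eventually.of_forall fun t => ?_)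
  rw [smoothTransition.zero_of_nonpos hs]
  exact smoothTransition.nonneg t

lemma deriv_smoothTransition_of_one_le {s : ℝ} (hs : 1 ≤ s) : deriv smoothTransition s = 0 := by
  refine IsLocalMax.deriv_eq_zero (Eventually.of_forall fun t => ?_)
  rw [smoothTransition.one_of_one_le hs]
  exact smoothTransition.le_one t

lemma hasDerivAt_smoothTransition (s : ℝ) :
    HasDerivAt smoothTransition (deriv smoothTransition s) s :=
  ((smoothTransition.contDiff (n := 1)).differentiable one_ne_zero s).hasDerivAt

lemma continuous_deriv_smoothTransition : Continuous (deriv smoothTransition) :=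
  (smoothTransition.contDiff (n := 1)).continuous_deriv le_rfl

lemma exists_deriv_smoothTransition_le : ∃ M : ℝ, 0 ≤ M ∧ ∀ s, deriv smoothTransition s ≤ M := by
  obtain ⟨M, hM⟩ := (isCompact_Icc (a := (0 : ℝ)) (b := 1)).exists_bound_of_continuousOn
    continuous_deriv_smoothTransition.continuousOn
  have hM0 : 0 ≤ M := (norm_nonneg _).trans (hM 0 (by simp))
  refine ⟨M, hM0, fun s => ?_⟩
  rcases le_total s 0 with h | h
  · rwa [deriv_smoothTransition_of_nonpos h]
  rcases le_total 1 s with h' | h'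
  · rwa [deriv_smoothTransition_of_one_le h']
  exact (le_abs_self _).trans (hM s ⟨h, h'⟩)

/-- The profile of the energy density of the cut-off ground state: in terms of the level variable
`s`, the Picone integrand of `G^a θ(s)` is `|∇G|_A^p / G` times this function. -/
noncomputable def profile (p κ s : ℝ) : ℝ :=
  breg p (gsExp p * smoothTransition s + deriv smoothTransition s / κ)
    (gsExp p * smoothTransition s)

variable {p : ℝ}

lemma profile_nonneg (hp : 1 < p) {κ : ℝ} (hκ : 0 < κ) (s : ℝ) : 0 ≤ profile p κ s := by
  have h1 := (gsExp_pos hp).le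
  have h2 := smoothTransition.nonneg s
  have h3 := deriv_smoothTransition_nonneg s
  exact breg_nonneg hp (by positivity) (by positivity)

lemma profile_eq_zero (hp : 1 < p) (κ : ℝ) {s : ℝ} (hs : s ≤ 0 ∨ 1 ≤ s) : profile p κ s = 0 := by
  have hd : deriv smoothTransition s = 0 :=
    hs.elim deriv_smoothTransition_of_nonpos deriv_smoothTransition_of_one_le
  have hx : 0 ≤ gsExp p * smoothTransition s :=
    mul_nonneg (gsExp_pos hp).le (smoothTransition.nonneg s)
  have h := breg_le hp hx hx
  have h' := breg_nonneg hp hx hx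
  simp only [sub_self, mul_zero] at h
  rw [profile, hd, zero_div, add_zero]
  exact le_antisymm h h'

lemma continuous_profile (hp : 1 < p) (κ : ℝ) : Continuous (profile p κ) := by
  have h1 : Continuous fun s => gsExp p * smoothTransition s :=
    continuous_const.mul smoothTransition.continuous
  have h2 : Continuous fun s => gsExp p * smoothTransition s + deriv smoothTransition s / κ :=
    h1.add (continuous_deriv_smoothTransition.div_const κ)
  have h3 : ∀ {f : ℝ → ℝ} (q : ℝ), 0 ≤ q → Continuous f → Continuous fun s => f s ^ q :=
    fun q hq hf => hf.rpow_const fun _ => Or.inr hq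
  unfold profile breg
  exact ((h3 p (by linarith) h2).add (continuous_const.mul (h3 p (by linarith) h1))).sub
    ((continuous_const.mul (h3 (p - 1) (by linarith) h1)).mul h2)

/-- The profile is `o(1/κ)`, since the Bregman divergence vanishes to second order. -/
lemma tendsto_integral_profile (hp : 1 < p) :
    Tendsto (fun k : ℕ => ((k : ℝ) + 1) * ∫ s in (0 : ℝ)..1, profile p (k + 1) s) atTop (𝓝 0) := by
  obtain ⟨M, hM0, hM⟩ := exists_deriv_smoothTransition_le
  have ha := (gsExp_pos hp).le
  have hle : ∀ (k : ℕ) (s : ℝ), ((k : ℝ) + 1) * profile p (k + 1) s ≤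
      p * ((gsExp p * smoothTransition s + deriv smoothTransition s / (k + 1)) ^ (p - 1) -
        (gsExp p * smoothTransition s) ^ (p - 1)) * deriv smoothTransition s := by
    intro k s
    have hk : (0 : ℝ) < k + 1 := by positivity
    have h2 := smoothTransition.nonneg s
    have h3 := deriv_smoothTransition_nonneg s
    have h := breg_le (x := gsExp p * smoothTransition s)
      (y := gsExp p * smoothTransition s + deriv smoothTransition s / (k + 1)) hp
      (by positivity) (by positivity)
    rw [add_sub_cancel_left, ← mul_div_assoc, le_div_iff₀ hk] at h
    rw [mul_comm]
    exact h
  simp only [← intervalIntegral.integral_const_mul]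
  suffices h : Tendsto (fun k : ℕ => ∫ s in (0 : ℝ)..1, ((k : ℝ) + 1) * profile p (k + 1) s) atTop
      (𝓝 (∫ s in (0 : ℝ)..1, (0 : ℝ))) by
    rwa [intervalIntegral.integral_zero] at h
  refine intervalIntegral.tendsto_integral_filter_of_dominated_convergence
    (fun _ => p * (gsExp p + M) ^ (p - 1) * M) ?_ ?_ ?_ ?_
  · exact Eventually.of_forall fun k =>
      (continuous_const.mul (continuous_profile hp _)).aestronglyMeasurable
  · refine Eventually.of_forall fun k => Eventually.of_forall fun s _ => ?_
    have hk : (0 : ℝ) < k + 1 := by positivity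
    have h2 := smoothTransition.nonneg s
    have h2' := smoothTransition.le_one s
    have h3 := deriv_smoothTransition_nonneg s
    rw [Real.norm_eq_abs, abs_of_nonneg (mul_nonneg hk.le (profile_nonneg hp hk s))]
    refine (hle k s).trans ?_
    have h4 : deriv smoothTransition s / (k + 1) ≤ M :=
      (div_le_self h3 (by linarith [(Nat.cast_nonneg k : (0 : ℝ) ≤ k)])).trans (hM s)
    have h5 : (gsExp p * smoothTransition s + deriv smoothTransition s / (k + 1)) ^ (p - 1) ≤
        (gsExp p + M) ^ (p - 1) := by
      refine Real.rpow_le_rpow (by positivity) ?_ (by linarith)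
      have := mul_le_of_le_one_right ha h2'
      linarith
    have h6 : 0 ≤ (gsExp p * smoothTransition s) ^ (p - 1) := by positivity
    have h7 : 0 ≤ (gsExp p + M) ^ (p - 1) := by positivity
    refine mul_le_mul (mul_le_mul_of_nonneg_left (by linarith) (by linarith)) (hM s) h3 ?_
    exact mul_nonneg (by linarith) h7
  · exact intervalIntegrable_const
  · refine Eventually.of_forall fun s _ => ?_
    have hlim : Tendsto (fun k : ℕ => p * ((gsExp p * smoothTransition s +
        deriv smoothTransition s / ((k : ℝ) + 1)) ^ (p - 1) -
        (gsExp p * smoothTransition s) ^ (p - 1)) * deriv smoothTransition s) atTop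
        (𝓝 (p * ((gsExp p * smoothTransition s + 0) ^ (p - 1) -
        (gsExp p * smoothTransition s) ^ (p - 1)) * deriv smoothTransition s)) := by
      have h1 : Tendsto (fun k : ℕ => deriv smoothTransition s / ((k : ℝ) + 1)) atTop (𝓝 0) := by
        have := (tendsto_one_div_add_atTop_nhds_zero_nat (𝕜 := ℝ)).const_mul
          (deriv smoothTransition s)
        simpa only [mul_one_div, mul_zero] using this
      exact ((((tendsto_const_nhds.add h1).rpow_const (Or.inr (by linarith))).sub
        tendsto_const_nhds).const_mul p).mul_const _
    rw [add_zero, sub_self, mul_zero, zero_mul] at hlim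
    refine tendsto_of_tendsto_of_tendsto_of_le_of_le tendsto_const_nhds hlim (fun k => ?_)
      fun k => hle k s
    have hk : (0 : ℝ) < k + 1 := by positivity
    exact mul_nonneg hk.le (profile_nonneg hp hk s)

variable {n : ℕ} {Ω : Set (EuclideanSpace ℝ (Fin n))}
  {A : EuclideanSpace ℝ (Fin n) → Matrix (Fin n) (Fin n) ℝ}
  {V φ G : EuclideanSpace ℝ (Fin n) → ℝ}

/-- The level variable `1 + log (G / m) / κ`, which is `≥ 1` on `{G ≥ m}` and `≤ 0` on
`{G ≤ m e^{-κ}}`. -/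
noncomputable def lvl (G : EuclideanSpace ℝ (Fin n) → ℝ) (m κ : ℝ)
    (x : EuclideanSpace ℝ (Fin n)) : ℝ := 1 + Real.log (G x / m) / κ

/-- The function `P (lvl G m κ)` on `Ω`, extended by zero. -/
noncomputable def trunc (Ω : Set (EuclideanSpace ℝ (Fin n))) (G : EuclideanSpace ℝ (Fin n) → ℝ)
    (m κ : ℝ) (P : ℝ → ℝ) : EuclideanSpace ℝ (Fin n) → ℝ := Ω.indicator fun x => P (lvl G m κ x)

namespace HardySetup

variable (S : HardySetup Ω A p V φ G)
include S

lemma hasFDerivAt_lvl {m κ : ℝ} (hm : 0 < m) {x : EuclideanSpace ℝ (Fin n)} (hx : x ∈ Ω) :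
    HasFDerivAt (lvl G m κ) ((κ⁻¹ * (G x)⁻¹) • fderiv ℝ G x) x := by
  have hG := S.pos x hx
  have h1 : HasFDerivAt (fun y => G y / m) (m⁻¹ • fderiv ℝ G x) x := by
    simpa only [div_eq_mul_inv] using (S.hasFDerivAt_G hx).mul_const m⁻¹
  have h2 := ((h1.log (by positivity)).mul_const κ⁻¹).const_add 1
  have h3 : κ⁻¹ • (G x / m)⁻¹ • m⁻¹ • fderiv ℝ G x = (κ⁻¹ * (G x)⁻¹) • fderiv ℝ G x := by
    rw [smul_smul, smul_smul]
    congr 1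
    field_simp
  rw [h3] at h2
  exact h2

lemma contDiffOn_lvl {m κ : ℝ} (hm : 0 < m) : ContDiffOn ℝ 1 (lvl G m κ) Ω :=
  contDiffOn_const.add (((S.contDiffOn.div_const m).log fun x hx =>
    (div_pos (S.pos x hx) hm).ne').div_const κ)

lemma isC1c_trunc {m κ : ℝ} (hm : 0 < m) (hκ : 0 < κ) {P : ℝ → ℝ} (hP : ContDiff ℝ 1 P)
    (hP0 : ∀ s ≤ 0, P s = 0) : IsC1c Ω (trunc Ω G m κ P) := by
  obtain ⟨K, hKΩ, hK, h⟩ := S.vanish (m * Real.exp (-κ)) (by positivity)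
  refine IsC1c.of_contDiffOn S.isOpen hK hKΩ ?_ fun x hx => ?_
  · refine (hP.comp_contDiffOn (S.contDiffOn_lvl (κ := κ) hm)).congr fun x hx => ?_
    rw [trunc, indicator_of_mem hx]
    rfl
  · by_cases hxΩ : x ∈ Ω
    · rw [trunc, indicator_of_mem hxΩ]
      refine hP0 _ ?_
      have h1 : Real.log (G x / m) ≤ -κ := by
        rw [Real.log_le_iff_le_exp (div_pos (S.pos x hxΩ) hm), div_le_iff₀ hm, mul_comm]
        exact (h x ⟨hxΩ, hx⟩).le
      have h2 : Real.log (G x / m) / κ ≤ -1 := by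
        rw [div_le_iff₀ hκ]
        linarith
      unfold lvl
      linarith
    · rw [trunc, indicator_of_notMem hxΩ]

lemma gradient_trunc {m κ : ℝ} (hm : 0 < m) {P D : ℝ → ℝ} (hP : ∀ s, HasDerivAt P (D s) s)
    {x : EuclideanSpace ℝ (Fin n)} (hx : x ∈ Ω) :
    gradient (trunc Ω G m κ P) x = (D (lvl G m κ x) * (κ⁻¹ * (G x)⁻¹)) • gradient G x := by
  have h1 := (hP (lvl G m κ x)).comp_hasFDerivAt x (S.hasFDerivAt_lvl (κ := κ) hm hx)
  have h2 : trunc Ω G m κ P =ᶠ[𝓝 x] P ∘ lvl G m κ := by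
    filter_upwards [S.isOpen.mem_nhds hx] with y hy
    rw [trunc, indicator_of_mem hy]
    rfl
  rw [(h1.congr_of_eventuallyEq h2).gradient_eq_symm, smul_smul, map_smul, gradient]

/-- A substitute for the coarea formula: testing the equation of `G` with `P (lvl G m κ)` evaluates
the integrals of functions of the level variable against `|∇G|_A^p / G`. -/
lemma level_identity {m κ : ℝ} (hm : 0 < m) (hκ : 0 < κ) {P D : ℝ → ℝ}
    (hP : ∀ s, HasDerivAt P (D s) s) (hD : Continuous D) (hP0 : ∀ s ≤ 0, P s = 0) :
    ∫ x in Ω, D (lvl G m κ x) * (aNorm A x (gradient G x) ^ p * (G x)⁻¹) =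
      κ * ∫ x in Ω, (φ x - V x * G x ^ (p - 1)) * P (lvl G m κ x) := by
  have hPc : ContDiff ℝ 1 P := by
    rw [contDiff_one_iff_deriv]
    refine ⟨fun s => (hP s).differentiableAt, ?_⟩
    rwa [show deriv P = D from funext fun s => (hP s).deriv]
  have hu := S.isC1c_trunc hm hκ hPc hP0
  have heq := S.eq_C1c hu
  set u := trunc Ω G m κ P with hudef
  have huc : ContinuousOn u Ω := hu.contDiff.continuous.continuousOn
  have hu0 : ∀ x ∈ Ω, x ∉ tsupport u → u x = 0 := fun x _ hx =>
    image_eq_zero_of_notMem_tsupport hx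
  have j2 : IntegrableOn (fun x => V x * G x ^ (p - 1) * u x) Ω := by
    simp only [mul_assoc]
    exact S.integrableOn_V_mul hu.compact.isCompact hu.subset ((S.continuousOn_rpow _).mul huc)
      fun x hx hx' => by rw [hu0 x hx hx', mul_zero]
  have j3 : IntegrableOn (fun x => φ x * u x) Ω :=
    integrableOn_of_continuousOn_of_zero S.isOpen hu.compact.isCompact hu.subset
      (S.isTest.1.continuous.continuousOn.mul huc) fun x hx hx' => by rw [hu0 x hx hx', mul_zero]
  have h1 : ∀ x ∈ Ω, D (lvl G m κ x) * (aNorm A x (gradient G x) ^ p * (G x)⁻¹) =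
      κ * (aNorm A x (gradient G x) ^ (p - 2) * aInner A x (gradient G x) (gradient u x)) := by
    intro x hx
    rw [hudef, S.gradient_trunc hm hP hx, aInner_smul_right, ← S.ell.flux_self hx S.one_lt]
    field_simp
  have h2 : ∀ x ∈ Ω, (φ x - V x * G x ^ (p - 1)) * P (lvl G m κ x) =
      φ x * u x - V x * G x ^ (p - 1) * u x := by
    intro x hx
    rw [hudef, trunc, indicator_of_mem hx, sub_mul]
  rw [setIntegral_congr_fun S.isOpen.measurableSet h1,
    setIntegral_congr_fun S.isOpen.measurableSet h2, integral_const_mul, integral_sub j3 j2]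
  linear_combination κ * heq

lemma integrableOn_source : IntegrableOn (fun x => φ x - V x * G x ^ (p - 1)) Ω :=
  (S.isTest.1.continuous.integrable_of_hasCompactSupport S.isTest.2.1).integrableOn.sub S.integrable

lemma lvl_continuousOn {m κ : ℝ} (hm : 0 < m) : ContinuousOn (lvl G m κ) Ω :=
  (S.contDiffOn_lvl hm).continuousOn

/-! ### Non-integrability of `W v^p` -/

lemma lintegral_eq_top :
    ∫⁻ x in Ω, ENNReal.ofReal (hardyW A p φ G x * (G x ^ gsExp p) ^ p) = ⊤ := by
  have hp := S.one_lt
  have ha := gsExp_pos hp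
  by_contra hne
  obtain ⟨M, hM0, hM⟩ := exists_deriv_smoothTransition_le
  have hvc : ContinuousOn (fun x => hardyW A p φ G x * (G x ^ gsExp p) ^ p) Ω :=
    S.continuousOn_W.mul ((S.continuousOn_rpow _).rpow_const fun _ _ => Or.inr (by linarith))
  have hWv : IntegrableOn (fun x => hardyW A p φ G x * (G x ^ gsExp p) ^ p) Ω := by
    refine (lintegral_ofReal_ne_top_iff_integrable
      (hvc.aestronglyMeasurable S.isOpen.measurableSet) ?_).1 hne
    refine (ae_restrict_iff' S.isOpen.measurableSet).2 (Eventually.of_forall fun x hx => ?_)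
    exact mul_nonneg (S.W_nonneg hx) (Real.rpow_nonneg (Real.rpow_nonneg (S.pos x hx).le _) _)
  set f : EuclideanSpace ℝ (Fin n) → ℝ := fun x => aNorm A x (gradient G x) ^ p * (G x)⁻¹ with hf
  have hf0 : ∀ x ∈ Ω, 0 ≤ f x := fun x hx =>
    mul_nonneg (Real.rpow_nonneg (aNorm_nonneg _ _) _) (inv_nonneg.2 (S.pos x hx).le)
  have hfc : ContinuousOn f Ω := (S.continuousOn_Npow (by linarith)).mul
    (S.contDiffOn.continuousOn.inv₀ fun x hx => (S.pos x hx).ne')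
  have hfle : ∀ x ∈ Ω, gsExp p ^ p * f x ≤ hardyW A p φ G x * (G x ^ gsExp p) ^ p := by
    intro x hx
    have hG := S.pos x hx
    have e : G x ^ (-p) * (G x ^ gsExp p) ^ p = (G x)⁻¹ := by
      rw [← Real.rpow_mul hG.le, gsExp_mul hp, ← Real.rpow_add hG, ← Real.rpow_neg_one]
      congr 1
      ring
    have h1 : 0 ≤ gsExp p ^ (p - 1) * (φ x * G x ^ (1 - p)) * (G x ^ gsExp p) ^ p := by
      have := S.nonneg x
      positivity
    have h2 : gsExp p ^ p * (aNorm A x (gradient G x) ^ p * G x ^ (-p)) * (G x ^ gsExp p) ^ p =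
        gsExp p ^ p * f x := by
      simp only [hf, ← e]
      ring
    rw [hardyW, add_mul, h2]
    linarith
  have hfi : IntegrableOn f Ω := by
    have h1 : IntegrableOn (fun x => gsExp p ^ p * f x) Ω := by
      refine hWv.mono' ((continuousOn_const.mul hfc).aestronglyMeasurable
        S.isOpen.measurableSet) ?_
      refine (ae_restrict_iff' S.isOpen.measurableSet).2 (Eventually.of_forall fun x hx => ?_)
      rw [Real.norm_eq_abs, abs_of_nonneg (mul_nonneg (by positivity) (hf0 x hx))]
      exact hfle x hx
    have hpos : 0 < gsExp p ^ p := by positivity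
    have h2 := h1.const_mul (gsExp p ^ p)⁻¹
    simp only [inv_mul_cancel_left₀ hpos.ne'] at h2
    exact h2
  -- The level identity for `P = θ` bounds `(k + 1) * J k` by a constant, while `J k` has a
  -- positive limit.
  set J : ℕ → ℝ := fun k => ∫ x in Ω, (φ x - V x * G x ^ (p - 1)) *
    Real.smoothTransition (lvl G 1 (k + 1) x) with hJ
  have hJle : ∀ k : ℕ, ((k : ℝ) + 1) * J k ≤ M * ∫ x in Ω, f x := by
    intro k
    have hk : (0 : ℝ) < k + 1 := by positivity
    rw [hJ, ← S.level_identity one_pos hk hasDerivAt_smoothTransition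
      continuous_deriv_smoothTransition (fun s hs => smoothTransition.zero_of_nonpos hs),
      ← integral_const_mul]
    refine integral_mono_of_nonneg ?_ (hfi.const_mul M) ?_
    · refine (ae_restrict_iff' S.isOpen.measurableSet).2 (Eventually.of_forall fun x hx => ?_)
      exact mul_nonneg (deriv_smoothTransition_nonneg _) (hf0 x hx)
    · refine (ae_restrict_iff' S.isOpen.measurableSet).2 (Eventually.of_forall fun x hx => ?_)
      exact mul_le_mul_of_nonneg_right (hM _) (hf0 x hx)
  have hJlim : Tendsto J atTop (𝓝 (∫ x in Ω, (φ x - V x * G x ^ (p - 1)))) := by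
    refine tendsto_integral_of_dominated_convergence
      (fun x => |φ x - V x * G x ^ (p - 1)|) ?_ S.integrableOn_source.abs ?_ ?_
    · intro k
      exact S.integrableOn_source.aestronglyMeasurable.mul
        ((smoothTransition.continuous.comp_continuousOn
          (S.lvl_continuousOn one_pos)).aestronglyMeasurable S.isOpen.measurableSet)
    · refine fun k => Eventually.of_forall fun x => ?_
      rw [norm_mul, Real.norm_eq_abs, Real.norm_eq_abs, abs_of_nonneg (smoothTransition.nonneg _)]
      exact mul_le_of_le_one_right (abs_nonneg _) (smoothTransition.le_one _)
    · refine Eventually.of_forall fun x => ?_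
      have h1 : Tendsto (fun k : ℕ => lvl G 1 (k + 1) x) atTop (𝓝 (1 + 0)) := by
        refine tendsto_const_nhds.add ?_
        have := (tendsto_one_div_add_atTop_nhds_zero_nat (𝕜 := ℝ)).const_mul
          (Real.log (G x / 1))
        simpa only [mul_one_div, mul_zero] using this
      have h2 := (smoothTransition.continuous.tendsto _).comp h1
      rw [add_zero, smoothTransition.one] at h2
      simpa only [mul_one, Function.comp_apply] using h2.const_mul (φ x - V x * G x ^ (p - 1))
  have hpos : 0 < ∫ x in Ω, (φ x - V x * G x ^ (p - 1)) := by
    rw [integral_sub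
      (S.isTest.1.continuous.integrable_of_hasCompactSupport S.isTest.2.1).integrableOn S.integrable]
    have := setIntegral_nonneg (μ := volume) S.isOpen.measurableSet fun x _ => S.nonneg x
    linarith [S.neg]
  have h1 : Tendsto (fun k : ℕ => (k : ℝ) + 1) atTop atTop :=
    tendsto_atTop_add_const_right _ _ tendsto_natCast_atTop_atTop
  have h2 := h1.atTop_mul_pos hpos hJlim
  obtain ⟨k, hk⟩ := (h2.eventually_gt_atTop (M * ∫ x in Ω, f x)).exists
  exact absurd (hJle k) (not_le.2 hk)

end HardySetup

end CutOff

/-! ### The null-sequence -/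

section NullSequence

open Real (smoothTransition)

variable {n : ℕ} {Ω : Set (EuclideanSpace ℝ (Fin n))}
  {A : EuclideanSpace ℝ (Fin n) → Matrix (Fin n) (Fin n) ℝ} {p : ℝ}
  {V φ G : EuclideanSpace ℝ (Fin n) → ℝ}

/-- Nonnegative `C¹_c` functions are limits of nonnegative test functions in energy and in
`L^p(B)`. -/
lemma IsC1c.exists_test_near (hΩ : IsOpen Ω) (hp : 1 < p) (hA : IsEllipticMatrix Ω A)
    {U : EuclideanSpace ℝ (Fin n) → ℝ}
    (hU : ∀ K ⊆ Ω, IsCompact K → IntegrableOn U K)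
    {u : EuclideanSpace ℝ (Fin n) → ℝ} (hu : IsC1c Ω u) (hu0 : ∀ x, 0 ≤ u x)
    {B : Set (EuclideanSpace ℝ (Fin n))} (hB : volume B < ⊤) {ε : ℝ} (hε : 0 < ε) :
    ∃ ψ, IsTestFun Ω ψ ∧ (∀ x, 0 ≤ ψ x) ∧
      |(∫ x in B, ψ x ^ p) - ∫ x in B, u x ^ p| < ε ∧
      |(∫ x in Ω, (aNorm A x (gradient ψ x) ^ p + U x * |ψ x| ^ p)) -
        ∫ x in Ω, (aNorm A x (gradient u x) ^ p + U x * |u x| ^ p)| < ε := by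
  obtain ⟨ψ, K, hKΩ, hK, C, hψ, hψK, hC, hCg, hlim, hlimg, hnn⟩ := hu.exists_approx hΩ
  have hψ0 := hnn hu0
  have hC0 : 0 ≤ C := (abs_nonneg _).trans (hC 0 0)
  have hp0 : 0 ≤ p := by linarith
  have h1 : Tendsto (fun j => ∫ x in B, ψ j x ^ p) atTop (𝓝 (∫ x in B, u x ^ p)) := by
    refine tendsto_integral_of_dominated_convergence (fun _ => C ^ p) ?_ ?_ ?_ ?_
    · exact fun j =>
        ((hψ j).1.continuous.rpow_const fun _ => Or.inr hp0).aestronglyMeasurable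
    · exact integrableOn_const hB.ne
    · refine fun j => Eventually.of_forall fun x => ?_
      rw [Real.norm_eq_abs, abs_of_nonneg (Real.rpow_nonneg (hψ0 j x) _)]
      exact Real.rpow_le_rpow (hψ0 j x) ((le_abs_self _).trans (hC j x)) hp0
    · exact Eventually.of_forall fun x => (hlim x).rpow_const (Or.inr hp0)
  have h2 : Tendsto (fun j => ∫ x in Ω, (aNorm A x (gradient (ψ j) x) ^ p + U x * |ψ j x| ^ p))
      atTop (𝓝 (∫ x in Ω, (aNorm A x (gradient u x) ^ p + U x * |u x| ^ p))) := by
    obtain ⟨D, hD0, hD⟩ := exists_aNorm_le hA hK hKΩ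
    have hz : ∀ j x, x ∉ K → |ψ j x| ^ p = 0 := fun j x hx => by
      rw [image_eq_zero_of_notMem_tsupport fun h => hx (hψK j h), abs_zero,
        Real.zero_rpow (by linarith)]
    refine tendsto_integral_of_dominated_convergence
      (K.indicator fun x => (D * C) ^ p + |U x| * C ^ p) ?_ ?_ ?_ ?_
    · intro j
      refine AEStronglyMeasurable.add ?_ ?_
      · exact ((hA.continuousOn_aNorm hΩ ((hψ j).isC1c.contDiff.contDiffOn.continuousOn_gradient
          hΩ)).rpow_const fun _ _ => Or.inr hp0).aestronglyMeasurable hΩ.measurableSet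
      · have hi : IntegrableOn (fun x => U x * |ψ j x| ^ p) Ω :=
          ((hU K hKΩ hK).mul_continuousOn ((hψ j).1.continuous.abs.rpow_const
            fun _ => Or.inr hp0).continuousOn hK).of_forall_sdiff_eq_zero
            hΩ.measurableSet fun x hx => by simp [hz j x hx.2]
        exact hi.aestronglyMeasurable
    · refine ((integrable_indicator_iff hK.measurableSet).2 ?_).integrableOn
      exact (integrableOn_const hK.measure_lt_top.ne).add ((hU K hKΩ hK).abs.mul_const _)
    · refine fun j => Eventually.of_forall fun x => ?_
      by_cases hxK : x ∈ K
      · rw [indicator_of_mem hxK]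
        refine (norm_add_le _ _).trans (add_le_add ?_ ?_)
        · rw [Real.norm_eq_abs, abs_of_nonneg (Real.rpow_nonneg (aNorm_nonneg _ _) _)]
          exact Real.rpow_le_rpow (aNorm_nonneg _ _)
            ((hD x hxK _).trans (mul_le_mul_of_nonneg_left (hCg j x) hD0)) hp0
        · rw [norm_mul, Real.norm_eq_abs, Real.norm_eq_abs,
            abs_of_nonneg (Real.rpow_nonneg (abs_nonneg _) _)]
          exact mul_le_mul_of_nonneg_left (Real.rpow_le_rpow (abs_nonneg _) (hC j x) hp0)
            (abs_nonneg _)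
      · rw [indicator_of_notMem hxK, hz j x hxK,
          gradient_eq_zero_of_notMem_tsupport fun h => hxK (hψK j h), aNorm_zero,
          Real.zero_rpow (by linarith), mul_zero, add_zero, norm_zero]
    · refine Eventually.of_forall fun x => ?_
      have h3 : Tendsto (fun j => aNorm A x (gradient (ψ j) x)) atTop
          (𝓝 (aNorm A x (gradient u x))) :=
        (Real.continuous_sqrt.tendsto _).comp (tendsto_aInner (hlimg x) (hlimg x))
      exact (h3.rpow_const (Or.inr hp0)).add
        (((hlim x).abs.rpow_const (Or.inr hp0)).const_mul (U x))
  obtain ⟨j, hj1, hj2⟩ :=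
    ((Metric.tendsto_nhds.1 h1 ε hε).and (Metric.tendsto_nhds.1 h2 ε hε)).exists
  exact ⟨ψ j, hψ j, hψ0 j, hj1, hj2⟩

namespace HardySetup

variable (S : HardySetup Ω A p V φ G)
include S

/-- The cut-off `θ(1 + log(G/m)/κ) G^a` of the ground state. -/
lemma isC1c_cutoff {m κ : ℝ} (hm : 0 < m) (hκ : 0 < κ) :
    IsC1c Ω (fun x => trunc Ω G m κ smoothTransition x * G x ^ gsExp p) :=
  S.isC1c_mul_rpow (S.isC1c_trunc hm hκ smoothTransition.contDiff
    fun _ hs => smoothTransition.zero_of_nonpos hs) _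

lemma cutoff_nonneg (m κ : ℝ) (x : EuclideanSpace ℝ (Fin n)) :
    0 ≤ trunc Ω G m κ smoothTransition x * G x ^ gsExp p := by
  by_cases hx : x ∈ Ω
  · rw [trunc, indicator_of_mem hx]
    exact mul_nonneg (smoothTransition.nonneg _) (Real.rpow_nonneg (S.pos x hx).le _)
  · rw [trunc, indicator_of_notMem hx, zero_mul]

lemma picone_cutoff {m κ : ℝ} (hm : 0 < m) (hκ : 0 < κ) {x : EuclideanSpace ℝ (Fin n)}
    (hx : x ∈ Ω) :
    picone A p G (fun x => trunc Ω G m κ smoothTransition x * G x ^ gsExp p) x =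
      profile p κ (lvl G m κ x) * (aNorm A x (gradient G x) ^ p * (G x)⁻¹) := by
  have hp := S.one_lt
  have hG := S.pos x hx
  have ha := gsExp_pos hp
  have hap := gsExp_mul hp
  have htr : trunc Ω G m κ smoothTransition x = smoothTransition (lvl G m κ x) := by
    rw [trunc, indicator_of_mem hx]
  have hu := S.isC1c_trunc hm hκ smoothTransition.contDiff
    fun _ hs => smoothTransition.zero_of_nonpos hs
  have hgrad : gradient (fun x => trunc Ω G m κ smoothTransition x * G x ^ gsExp p) x =
      (G x ^ (gsExp p - 1) * (gsExp p * smoothTransition (lvl G m κ x) +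
        deriv smoothTransition (lvl G m κ x) / κ)) • gradient G x := by
    rw [S.gradient_mul_rpow hu hx, S.gradient_trunc hm hasDerivAt_smoothTransition hx, htr,
      smul_smul, ← add_smul]
    congr 1
    rw [Real.rpow_sub_one hG.ne']
    field_simp
  have ht0 := smoothTransition.nonneg (lvl G m κ x)
  have hd0 := deriv_smoothTransition_nonneg (lvl G m κ x)
  unfold picone profile breg
  simp only [hgrad, htr]
  generalize smoothTransition (lvl G m κ x) = t at *
  generalize deriv smoothTransition (lvl G m κ x) = d at *
  generalize gsExp p = a at *
  have hY : 0 ≤ a * t + d / κ := by positivity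
  generalize a * t + d / κ = Y at *
  have hv : 0 ≤ t * G x ^ a := by positivity
  have hc : 0 ≤ G x ^ (a - 1) * Y := by positivity
  rw [aNorm_smul, aInner_smul_right, abs_of_nonneg hc, abs_of_nonneg hv,
    mul_left_comm (aNorm A x (gradient G x) ^ (p - 2)), S.ell.flux_self hx hp,
    Real.mul_rpow hc (aNorm_nonneg _ _), Real.mul_rpow (by positivity) hY,
    Real.mul_rpow (x := t) (by positivity) (by positivity),
    Real.mul_rpow ha.le ht0, Real.mul_rpow ha.le ht0, ← Real.rpow_neg_one]
  have e1 : (G x ^ (a - 1)) ^ p = G x ^ (-1 : ℝ) := by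
    rw [← Real.rpow_mul hG.le]
    congr 1
    linear_combination hap
  have e2 : (G x ^ a) ^ p * G x ^ (-p) = G x ^ (-1 : ℝ) := by
    rw [← Real.rpow_mul hG.le, ← Real.rpow_add hG]
    congr 1
    linear_combination hap
  have e3 : (t * G x ^ a) ^ (p - 2) * (t * G x ^ a) = t ^ (p - 1) * G x ^ (a * (p - 1)) := by
    rw [← Real.rpow_add_one' hv (by linarith), Real.mul_rpow ht0 (by positivity),
      ← Real.rpow_mul hG.le]
    ring_nf
  have e4 : G x ^ (a * (p - 1)) * G x ^ (1 - p) * G x ^ (a - 1) = G x ^ (-1 : ℝ) := by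
    rw [← Real.rpow_add hG, ← Real.rpow_add hG]
    congr 1
    linear_combination hap
  rw [e1, e3]
  linear_combination ((p - 1) * a ^ p * t ^ p * aNorm A x (gradient G x) ^ p) * e2 -
    (p * a ^ (p - 1) * t ^ (p - 1) * Y * aNorm A x (gradient G x) ^ p) * e4

/-- The energy of the cut-off ground state, evaluated by the level identity for a primitive of the
profile. -/
lemma abs_energy_cutoff_le {m κ : ℝ} (hm : 0 < m) (hκ : 0 < κ) :
    |∫ x in Ω, picone A p G (fun x => trunc Ω G m κ smoothTransition x * G x ^ gsExp p) x| ≤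
      (κ * ∫ s in (0 : ℝ)..1, profile p κ s) * ∫ x in Ω, |φ x - V x * G x ^ (p - 1)| := by
  have hp := S.one_lt
  have hc := continuous_profile hp κ
  have hi : ∀ a b, IntervalIntegrable (profile p κ) volume a b := hc.intervalIntegrable
  set P : ℝ → ℝ := fun s => ∫ t in (0 : ℝ)..s, profile p κ t with hPdef
  have hP : ∀ s, HasDerivAt P (profile p κ s) s := fun s =>
    intervalIntegral.integral_hasDerivAt_right (hi 0 s) (hc.stronglyMeasurableAtFilter _ _)
      hc.continuousAt
  have hmono : Monotone P := by
    refine monotone_of_deriv_nonneg (fun s => (hP s).differentiableAt) fun s => ?_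
    rw [(hP s).deriv]
    exact profile_nonneg hp hκ s
  have hP0 : ∀ s ≤ 0, P s = 0 := by
    intro s hs
    have : ∫ t in (0 : ℝ)..s, profile p κ t = ∫ t in (0 : ℝ)..s, (0 : ℝ) := by
      refine intervalIntegral.integral_congr fun t ht => ?_
      rw [uIcc_of_ge hs] at ht
      exact profile_eq_zero hp κ (Or.inl ht.2)
    rw [hPdef]
    simpa using this
  have hP1 : ∀ s, P s ≤ P 1 := by
    intro s
    rcases le_total s 1 with h | h
    · exact hmono h
    · have h1 : P s = P 1 + ∫ t in (1 : ℝ)..s, profile p κ t :=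
        (intervalIntegral.integral_add_adjacent_intervals (hi 0 1) (hi 1 s)).symm
      have h2 : ∫ t in (1 : ℝ)..s, profile p κ t = ∫ t in (1 : ℝ)..s, (0 : ℝ) := by
        refine intervalIntegral.integral_congr fun t ht => ?_
        rw [uIcc_of_le h] at ht
        exact profile_eq_zero hp κ (Or.inr ht.1)
      rw [h1, h2]
      simp
  have hPn : ∀ s, 0 ≤ P s := by
    intro s
    rcases le_total s 0 with h | h
    · rw [hP0 s h]
    · rw [← hP0 0 le_rfl]
      exact hmono h
  rw [setIntegral_congr_fun S.isOpen.measurableSet fun x hx => S.picone_cutoff hm hκ hx,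
    S.level_identity hm hκ hP hc hP0, abs_mul, abs_of_pos hκ, mul_assoc]
  refine mul_le_mul_of_nonneg_left ?_ hκ.le
  rw [← integral_const_mul, ← Real.norm_eq_abs]
  refine norm_integral_le_of_norm_le (S.integrableOn_source.abs.const_mul _)
    (Eventually.of_forall fun x => ?_)
  rw [norm_mul, Real.norm_eq_abs, Real.norm_eq_abs, abs_of_nonneg (hPn _), mul_comm]
  exact mul_le_mul_of_nonneg_right (hP1 _) (abs_nonneg _)

lemma exists_nullSequence : ∃ u : ℕ → EuclideanSpace ℝ (Fin n) → ℝ,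
    IsNullSequence A p (fun x => gsExp p ^ (p - 1) * V x - hardyW A p φ G x) Ω u := by
  have hp := S.one_lt
  obtain ⟨x₀, hx₀⟩ := S.ne
  have hx₀Ω : x₀ ∈ Ω := S.isTest.2.2 (subset_tsupport _ hx₀)
  obtain ⟨r, hr, hball⟩ := Metric.nhds_basis_closedBall.mem_iff.1 (S.isOpen.mem_nhds hx₀Ω)
  have hKc : IsCompact (Metric.closedBall x₀ r) := isCompact_closedBall x₀ r
  have hcl : closure (Metric.ball x₀ r) ⊆ Metric.closedBall x₀ r :=
    Metric.closure_ball_subset_closedBall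
  have hBΩ : Metric.ball x₀ r ⊆ Ω := Metric.ball_subset_closedBall.trans hball
  obtain ⟨y, hy, hmin⟩ := hKc.exists_isMinOn ⟨x₀, Metric.mem_closedBall_self hr.le⟩
    (S.contDiffOn.continuousOn.mono hball)
  have hm : 0 < G y := S.pos y (hball hy)
  set m := G y with hmdef
  set w : ℕ → EuclideanSpace ℝ (Fin n) → ℝ := fun k x =>
    trunc Ω G m (k + 1) smoothTransition x * G x ^ gsExp p with hw
  have hk : ∀ k : ℕ, (0 : ℝ) < k + 1 := fun k => by positivity
  have hwB : ∀ k, ∀ x ∈ Metric.ball x₀ r, w k x = G x ^ gsExp p := by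
    intro k x hx
    have h1 : 0 ≤ Real.log (G x / m) := by
      refine Real.log_nonneg ((one_le_div hm).2 ?_)
      exact hmin (Metric.ball_subset_closedBall hx)
    have h2 : 1 ≤ lvl G m (k + 1) x := by
      have := div_nonneg h1 (hk k).le
      unfold lvl
      linarith
    simp only [hw]
    rw [trunc, indicator_of_mem (hBΩ hx), smoothTransition.one_of_one_le h2, one_mul]
  set I := ∫ x in Metric.ball x₀ r, (G x ^ gsExp p) ^ p with hI
  have hwI : ∀ k, ∫ x in Metric.ball x₀ r, w k x ^ p = I := fun k =>
    setIntegral_congr_fun measurableSet_ball fun x hx => by simp only [hwB k x hx]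
  have hcont : ContinuousOn (fun x => (G x ^ gsExp p) ^ p) Ω :=
    (S.continuousOn_rpow _).rpow_const fun _ _ => Or.inr (by linarith)
  have hIpos : 0 < I := by
    have hposB : ∀ x ∈ Metric.ball x₀ r, 0 < (G x ^ gsExp p) ^ p := fun x hx =>
      Real.rpow_pos_of_pos (Real.rpow_pos_of_pos (S.pos x (hBΩ hx)) _) _
    refine (setIntegral_pos_iff_support_of_nonneg_ae ?_ ?_).2 ?_
    · exact (ae_restrict_iff' measurableSet_ball).2
        (Eventually.of_forall fun x hx => (hposB x hx).le)
    · exact ((hcont.mono hball).integrableOn_compact hKc).mono_set Metric.ball_subset_closedBall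
    · refine (Metric.measure_ball_pos volume x₀ hr).trans_le (measure_mono fun x hx => ?_)
      exact ⟨(hposB x hx).ne', hx⟩
  have hU : ∀ K ⊆ Ω, IsCompact K →
      IntegrableOn (fun x => gsExp p ^ (p - 1) * V x - hardyW A p φ G x) K := fun K hKΩ hK =>
    ((S.integrableOn_V hK hKΩ).const_mul _).sub
      ((S.continuousOn_W.mono hKΩ).integrableOn_compact hK)
  have hex := fun k : ℕ => (S.isC1c_cutoff hm (hk k)).exists_test_near S.isOpen hp S.ell hU
    (S.cutoff_nonneg m (k + 1)) (B := Metric.ball x₀ r) measure_ball_lt_top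
    (ε := min (I / 2) (1 / ((k : ℝ) + 1))) (lt_min (by positivity) (by positivity))
  choose ψ hψ hψ0 hψB hψE using hex
  refine ⟨ψ, hψ, hψ0, ⟨Metric.ball x₀ r, Metric.isOpen_ball, ⟨x₀, Metric.mem_ball_self hr⟩,
    hKc.of_isClosed_subset isClosed_closure hcl, hcl.trans hball,
    min (I / 2) (3 / 2 * I)⁻¹, lt_min (by positivity) (by positivity), fun k => ?_⟩, ?_⟩
  · have h1 := (hψB k).trans_le (min_le_left _ _)
    have h2 : ∫ x in Metric.ball x₀ r,
      (trunc Ω G m (k + 1) smoothTransition x * G x ^ gsExp p) ^ p = I := hwI k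
    rw [h2, abs_lt] at h1
    refine ⟨(min_le_left _ _).trans (by linarith), ?_⟩
    have h3 : 3 / 2 * I ≤ (min (I / 2) (3 / 2 * I)⁻¹)⁻¹ :=
      le_inv_of_le_inv₀ (lt_min (by positivity) (by positivity)) (min_le_right _ _)
    linarith
  · have hlim := ((tendsto_integral_profile hp).mul_const
      (∫ x in Ω, |φ x - V x * G x ^ (p - 1)|)).add
      (tendsto_one_div_add_atTop_nhds_zero_nat (𝕜 := ℝ))
    rw [zero_mul, zero_add] at hlim
    refine squeeze_zero_norm (fun k => ?_) hlim
    have h1 := (hψE k).trans_le (min_le_right _ _)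
    rw [(S.energy_eq (S.isC1c_cutoff hm (hk k))).2.2] at h1
    have h2 := S.abs_energy_cutoff_le hm (hk k)
    rw [Real.norm_eq_abs]
    rw [abs_lt] at h1
    rw [abs_le] at h2 ⊢
    constructor <;> linarith [h1.1, h1.2, h2.1, h2.2]

end HardySetup

end NullSequence

theorem optimal_hardy_weight_main
    {n : ℕ} (hn : 2 ≤ n) (Ω : Set (EuclideanSpace ℝ (Fin n)))
    (hΩopen : IsOpen Ω) (hΩconn : IsConnected Ω)
    (p : ℝ) (hp : 1 < p)
    (A : EuclideanSpace ℝ (Fin n) → Matrix (Fin n) (Fin n) ℝ)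
    (hA : IsEllipticMatrix Ω A)
    (V : EuclideanSpace ℝ (Fin n) → ℝ) (hV : InMorreyLoc p Ω V)
    (hsub : IsSubcritical A p V Ω)
    (φ : EuclideanSpace ℝ (Fin n) → ℝ) (hφ : IsTestFun Ω φ) (hφnonneg : ∀ x, 0 ≤ φ x)
    (hφne : ∃ x, φ x ≠ 0)
    (G : EuclideanSpace ℝ (Fin n) → ℝ) (α : ℝ) (hα : α ∈ Set.Ioc (0:ℝ) 1)
    (hG1 : IsC1Holder α Ω G) (hGpos : ∀ x ∈ Ω, 0 < G x)
    (hGsol : IsWeakSolution A p V φ Ω G)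
    (hGinf : TendstoZeroAtInfinityIn Ω Ω G)
    (hVG : (∫ x in Ω, V x * G x ^ (p - 1)) < 0)
    (hVGfin : (∫⁻ x in Ω, ENNReal.ofReal (|V x| * G x ^ (p - 1))) < ⊤) :
    ∃ W : EuclideanSpace ℝ (Fin n) → ℝ, ContinuousOn W Ω ∧ (∀ x ∈ Ω, 0 ≤ W x) ∧ (∃ x ∈ Ω, W x ≠ 0) ∧
      ∃ v : EuclideanSpace ℝ (Fin n) → ℝ, ContDiffOn ℝ 1 v Ω ∧ (∀ x ∈ Ω, 0 < v x) ∧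
        (∀ ψ, IsTestFun Ω ψ →
          (∫ x in Ω, W x * |ψ x| ^ p)
            ≤ ∫ x in Ω, ((aNorm A x (gradient ψ x)) ^ p +
                (V x / (p / (p - 1)) ^ (p - 1)) * |ψ x| ^ p)) ∧
        IsWeakSolution A p (fun x => V x / (p / (p - 1)) ^ (p - 1) - W x)
          (fun _ => (0:ℝ)) Ω v ∧
        (∃ u : ℕ → EuclideanSpace ℝ (Fin n) → ℝ,
          IsNullSequence A p (fun x => V x / (p / (p - 1)) ^ (p - 1) - W x) Ω u) ∧
        (∫⁻ x in Ω, ENNReal.ofReal (W x * v x ^ p) = ⊤) := by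
  have hVGint : IntegrableOn (fun x => V x * G x ^ (p - 1)) Ω := by
    -- otherwise the integral would take the junk value `0`
    by_contra h
    rw [integral_undef h] at hVG
    exact lt_irrefl _ hVG
  have S : HardySetup Ω A p V φ G :=
    ⟨hΩopen, hp, hA, hφ, hφnonneg, hφne, hG1.1, hGpos, hGsol, hGinf, hVGint, hVG⟩
  simp only [div_hardyConst hp]
  exact ⟨hardyW A p φ G, S.continuousOn_W, fun x hx => S.W_nonneg hx, S.W_ne,
    fun x => G x ^ gsExp p, S.contDiffOn_rpow _, fun x hx => Real.rpow_pos_of_pos (hGpos x hx) _,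
    fun ψ hψ => S.hardy hψ.isC1c, S.ground_state, S.exists_nullSequence, S.lintegral_eq_top⟩
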